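/- arXiv:1311.7049 — 2 statements merged into one kernel-verified Lean document; each statement's English description precedes it below -/
import Mathlib

section
/- Let X be a strictly stable random variable with parameters (ν, θ, τ). Then E[(log|X|)⁷] = τ⁷ + 21τ⁵·DV + 70τ⁴·ζ(3)(ν^{3/2} − 1) + 35τ³·π⁴((1 − θ⁴)/8 + (ν² − 1)/15) + 105τ·DV³ + 420τ²·ζ(3)(ν^{3/2} − 1)·DV + 504τ²·ζ(5)(ν^{5/2} − 1) + 210ζ(3)(ν^{3/2} − 1)·DV² + 105τ·π⁴((1 − θ⁴)/8 + (ν² − 1)/15)·DV + 56τ·π⁶((1 − θ⁶)/32 + (ν³ − 1)/63) + 504ζ(5)(ν^{5/2} − 1)·DV + 70ζ(3)(ν^{3/2} − 1)·π⁴((1 − θ⁴)/8 + (ν² − 1)/15) + 280τ·ζ(3)²(ν^{3/2} − 1)² + 720ζ(7)(ν^{7/2} − 1) + 105τ³·DV². -/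
open MeasureTheory ProbabilityTheory

/-- The real value of the Riemann zeta function at a real argument. -/
noncomputable def zetaR (s : ℝ) : ℝ := (riemannZeta (s : ℂ)).re

/-- A real random variable `X` is strictly stable with parameters `(ν, θ, τ)` if
`ν ≥ 1/4`, `|θ| ≤ min 1 (2√ν − 1)`, `P(X = 0) = 0`, `log |X|` has finite absolute
moments of every order, and the characteristic function of `X` is
`E[exp(i k X)] = exp(−exp(ν^{−1/2}(log|k| + τ − i(π/2)θ sign k) + C(ν^{−1/2} − 1)))`
for all real `k ≠ 0`, where `C` is the Euler–Mascheroni constant. -/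
def IsStrictlyStable {Ω : Type*} [MeasureSpace Ω] (X : Ω → ℝ) (ν θ τ : ℝ) : Prop :=
  Measurable X ∧ (1/4 : ℝ) ≤ ν ∧ |θ| ≤ min 1 (2 * Real.sqrt ν - 1) ∧
  (ℙ : Measure Ω) {ω | X ω = 0} = 0 ∧
  (∀ p : ℕ, Integrable (fun ω => (abs (Real.log (abs (X ω)))) ^ p)) ∧
  ∀ k : ℝ, k ≠ 0 →
    (∫ ω, Complex.exp (Complex.I * (k : ℂ) * (X ω : ℂ))) =
      Complex.exp (-Complex.exp
        (((ν ^ (-(1/2) : ℝ) : ℝ) : ℂ) *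
            (((Real.log |k| : ℝ) : ℂ) + (τ : ℂ) -
              Complex.I * ((Real.pi / 2 : ℝ) : ℂ) * (θ : ℂ) * ((Real.sign k : ℝ) : ℂ)) +
          ((Real.eulerMascheroniConstant : ℝ) : ℂ) * (((ν ^ (-(1/2) : ℝ) : ℝ) : ℂ) - 1)))

section Helpers
open Filter Topology


lemma zetaR_hasSum (k : ℕ) (hk : 2 ≤ k) : HasSum (fun m : ℕ => 1 / ((m:ℝ)+1)^k) (zetaR k) := by
  have h1 : Summable (fun m : ℕ => 1 / ((m:ℝ)+1)^k) := by
    have := (summable_nat_add_iff 1).2 (Real.summable_one_div_nat_pow.2 (by omega : 1 < k))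
    simpa using this
  have h2 := zeta_nat_eq_tsum_of_gt_one (by omega : 1 < k)
  have h3 : Summable (fun n : ℕ => 1 / (n:ℝ)^k) := Real.summable_one_div_nat_pow.2 (by omega : 1 < k)
  have h4 : zetaR k = ∑' n : ℕ, 1 / (n:ℝ)^k := by
    unfold zetaR
    have : riemannZeta (k:ℂ) = ((∑' n : ℕ, 1 / (n:ℝ)^k : ℝ) : ℂ) := by
      rw [h2]; push_cast; rfl
    push_cast
    rw [this, Complex.ofReal_re]
  rw [h4, h3.tsum_eq_zero_add]
  have : (k:ℕ) ≠ 0 := by omega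
  simpa [this] using h1.hasSum

noncomputable def acoef : ℕ → ℝ
  | 0 => 0
  | 1 => Real.eulerMascheroniConstant
  | (n+2) => zetaR ((n+2 : ℕ) : ℝ) / ((n+2 : ℕ) : ℝ)

lemma tail_hasSum {y : ℝ} (hy : |y| < 1) :
    HasSum (fun j : ℕ => y ^ (j+2) / ((j+2 : ℕ):ℝ)) (-Real.log (1 - y) - y) := by
  have h := Real.hasSum_pow_div_log_of_abs_lt_one hy
  rw [← hasSum_nat_add_iff' 1] at h
  have e : (fun j : ℕ => y ^ (j+2) / ((j+2 : ℕ):ℝ)) = fun n : ℕ => y ^ (n + 1 + 1) / (((n + 1 : ℕ):ℝ) + 1) := by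
    funext j
    rw [Nat.cast_add, Nat.cast_add, Nat.cast_one, Nat.cast_two]
    congr 1; ring
  rw [e]
  rw [Finset.sum_range_one] at h
  simpa using h

lemma F_bound (x : ℝ) (m j : ℕ) : ‖(x / ((m:ℝ)+1)) ^ (j+2) / ((j+2 : ℕ):ℝ)‖ ≤ 1 / ((m:ℝ)+1)^2 * |x|^(j+2) := by
  have hm : (1:ℝ) ≤ (m:ℝ)+1 := by linarith [m.cast_nonneg (α := ℝ)]
  generalize (m:ℝ)+1 = M at *
  have h2 : (1:ℝ) ≤ ((j+2:ℕ):ℝ) := by push_cast; linarith [j.cast_nonneg (α := ℝ)]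
  generalize ((j+2:ℕ):ℝ) = J at *
  have hM : 0 < M := by linarith
  have hJ : 0 < J := by linarith
  rw [norm_div, norm_pow, norm_div, Real.norm_eq_abs, Real.norm_eq_abs, Real.norm_eq_abs, abs_of_pos hM, abs_of_pos hJ,
    div_pow, div_div, one_div_mul_eq_div]
  apply div_le_div_of_nonneg_left (by positivity) (by positivity)
  calc M^2 ≤ M^(j+2) := pow_le_pow_right₀ hm (by omega)
      _ ≤ M^(j+2) * J := le_mul_of_one_le_right (by positivity) h2

set_option maxHeartbeats 400000 in
lemma log_Gamma_hasSum {x : ℝ} (hx : |x| < 1) :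
    HasSum (fun n => acoef n * x ^ n) (Real.log (Real.Gamma (1 - x))) := by
  have hx1 : 0 < 1 - x := by linarith [le_abs_self x]
  set F : ℕ × ℕ → ℝ := fun p => (x / ((p.1:ℝ)+1)) ^ (p.2+2) / ((p.2+2 : ℕ):ℝ) with hF
  have hFs : Summable F := by
    have s1 : Summable (fun m : ℕ => 1 / ((m:ℝ)+1)^2) := by
      exact (zetaR_hasSum 2 le_rfl).summable
    have s2 : Summable (fun j : ℕ => |x| ^ (j+2)) :=
      (summable_nat_add_iff 2).2 (summable_geometric_of_lt_one (abs_nonneg x) hx)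
    refine Summable.of_norm_bounded (s1.mul_of_nonneg s2 (fun m => by positivity) (fun m => by positivity)) ?_
    rintro ⟨m, j⟩
    exact F_bound x m j
  have hrow : ∀ m : ℕ, HasSum (fun j => F (m, j)) (-Real.log (1 - x/((m:ℝ)+1)) - x/((m:ℝ)+1)) := by
    intro m
    have hlt : |x/((m:ℝ)+1)| < 1 := ?_
    · have := tail_hasSum hlt
      simp only [hF]
      exact this
    rw [abs_div, div_lt_one (by positivity)]
    rw [abs_of_pos (by positivity : (0:ℝ) < (m:ℝ)+1)]
    linarith [m.cast_nonneg (α := ℝ)]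
  have hcol : ∀ j : ℕ, HasSum (fun m => F (m, j)) (acoef (j+2) * x^(j+2)) := by
    intro j
    have := (zetaR_hasSum (j+2) (by omega)).mul_left (x^(j+2) / ((j+2 : ℕ):ℝ))
    convert! this using 1
    · funext m; simp only [hF]; rw [div_pow]; field_simp
    · simp only [acoef]; ring
  have hS : HasSum F (∑' p, F p) := hFs.hasSum
  have hrowS := hS.prod_fiberwise hrow
  have hS' : HasSum (fun p : ℕ × ℕ => F p.swap) (∑' p, F p) :=
    (Equiv.prodComm ℕ ℕ).hasSum_iff.2 hS
  have hcolS := hS'.prod_fiberwise hcol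
  set S := ∑' p, F p
  have lim1 := Real.BohrMollerup.tendsto_log_gamma hx1
  have lim2 : Tendsto (fun n : ℕ => (Real.log n - Real.log ((n:ℝ)+1)) + x * ((harmonic (n+1) : ℚ) - Real.log ((n+1 : ℕ):ℝ)) - x * (Real.log n - Real.log ((n:ℝ)+1))
      + ∑ m ∈ Finset.range (n+1), (-Real.log (1 - x/((m:ℝ)+1)) - x/((m:ℝ)+1))) atTop
      (𝓝 (0 + x * Real.eulerMascheroniConstant - x * 0 + S)) := by
    have l0 : Tendsto (fun n : ℕ => (Real.log n - Real.log ((n:ℝ)+1))) atTop (𝓝 0) := by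
      have := (Real.tendsto_log_nat_add_one_sub_log).neg
      simpa using this
    exact ((l0.add (((tendsto_add_atTop_iff_nat 1).2 Real.tendsto_harmonic_sub_log).const_mul x)).sub (l0.const_mul x)).add
      ((tendsto_add_atTop_iff_nat 1).2 hrowS.tendsto_sum_nat)
  have key : Real.log (Real.Gamma (1 - x)) = x * Real.eulerMascheroniConstant + S := by
    have := tendsto_nhds_unique (lim1.congr' ?_) lim2
    · rw [this]; ring
    filter_upwards with n
    unfold Real.BohrMollerup.logGammaSeq
    have e1 : ∀ m ∈ Finset.range (n+1), Real.log (1 - x + m) = Real.log ((m:ℝ)+1) + Real.log (1 - x/((m:ℝ)+1)) := by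
      intro m _
      have hp : (0:ℝ) < (m:ℝ)+1 := by positivity
      have : (1:ℝ) - x/((m:ℝ)+1) ≠ 0 := by
        rw [sub_ne_zero, ne_comm, Ne, div_eq_one_iff_eq hp.ne']
        intro h; have := le_abs_self x; linarith [m.cast_nonneg (α := ℝ)]
      rw [← Real.log_mul hp.ne' this]
      congr 1; field_simp; ring
    have e2 : ∑ m ∈ Finset.range (n+1), Real.log ((m:ℝ)+1) = Real.log (n.factorial) + Real.log ((n:ℝ)+1) := by
      have : ∀ n : ℕ, ∑ m ∈ Finset.range n, Real.log ((m:ℝ)+1) = Real.log (n.factorial) := by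
        intro n
        induction n with
        | zero => simp
        | succ n ih => 
          rw [Finset.sum_range_succ, ih, Nat.factorial_succ]; push_cast
          rw [Real.log_mul (by positivity) (by positivity)]; ring
      rw [Finset.sum_range_succ, this]
    have e3 : ∑ m ∈ Finset.range (n+1), x/((m:ℝ)+1) = x * ((harmonic (n+1) : ℚ) : ℝ) := by
      unfold harmonic; push_cast; rw [Finset.mul_sum]; simp [div_eq_mul_inv]
    rw [Finset.sum_congr rfl e1, Finset.sum_add_distrib, e2, Finset.sum_sub_distrib, e3, Finset.sum_neg_distrib]
    push_cast; ring
  rw [key, ← hasSum_nat_add_iff' 2]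
  convert! hcolS using 1
  simp [Finset.sum_range_succ, acoef]; ring


lemma iteratedDeriv_of_hasSum {f : ℝ → ℝ} {c : ℕ → ℝ}
    (h : ∀ᶠ z in 𝓝 (0:ℝ), HasSum (fun n => c n * z ^ n) (f z)) :
    AnalyticAt ℝ f 0 ∧ ∀ n, iteratedDeriv n f 0 = n.factorial * c n := by
  have hp : HasFPowerSeriesAt f (FormalMultilinearSeries.ofScalars ℝ c) 0 := by
    rw [hasFPowerSeriesAt_iff]
    filter_upwards [h] with z hz
    simpa [mul_comm] using hz
  refine ⟨hp.analyticAt, fun n => ?_⟩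
  have h2 := hp.analyticAt.hasFPowerSeriesAt
  have h3 := hp.eq_formalMultilinearSeries h2
  have h4 := congrArg (fun p => FormalMultilinearSeries.coeff p n) h3
  simp only [FormalMultilinearSeries.coeff_ofScalars] at h4
  rw [h4]; field_simp

lemma exp_rec {K : ℝ → ℝ} (hK : AnalyticAt ℝ K 0) (n : ℕ) :
    iteratedDeriv (n+1) (fun t => Real.exp (K t)) 0 =
      ∑ i ∈ Finset.range (n+1), (n.choose i : ℝ) * iteratedDeriv (i+1) K 0 *
        iteratedDeriv (n-i) (fun t => Real.exp (K t)) 0 := by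
  have hE : AnalyticAt ℝ (fun t => Real.exp (K t)) 0 := hK.rexp
  rw [iteratedDeriv_succ']
  have e : deriv (fun t => Real.exp (K t)) =ᶠ[𝓝 0] (deriv K * fun t => Real.exp (K t)) := by
    filter_upwards [hK.eventually_analyticAt] with t ht
    rw [deriv_exp ht.differentiableAt]
    simp [mul_comm]
  rw [e.iteratedDeriv_eq, iteratedDeriv_mul hK.deriv.contDiffAt hE.contDiffAt]
  simp only [iteratedDeriv_succ']

lemma exp_seven {K : ℝ → ℝ} (hK : AnalyticAt ℝ K 0) (k : ℕ → ℝ) (hk : ∀ n, iteratedDeriv n K 0 = k n)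
    (h0 : K 0 = 0) : iteratedDeriv 7 (fun t => Real.exp (K t)) 0 =
      k 1^7 + 21*k 1^5*k 2+35*k 1^4*k 3+105*k 1^3*k 2^2+35*k 1^3*k 4+210*k 1^2*k 2*k 3+105*k 1*k 2^3+21*k 1^2*k 5+105*k 1*k 2*k 4+70*k 1*k 3^2+7*k 1*k 6+105*k 2^2*k 3+21*k 2*k 5+35*k 3*k 4+k 7 := by
  have m0 : iteratedDeriv 0 (fun t => Real.exp (K t)) 0 = 1 := by simp [h0]
  have m1 := exp_rec hK 0
  have m2 := exp_rec hK 1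
  have m3 := exp_rec hK 2
  have m4 := exp_rec hK 3
  have m5 := exp_rec hK 4
  have m6 := exp_rec hK 5
  have m7 := exp_rec hK 6
  simp only [hk] at *
  generalize (fun t => Real.exp (K t)) = G at *
  norm_num [Finset.sum_range_succ, Nat.choose, m0, -iteratedDeriv_zero, -iteratedDeriv_one] at m1 m2 m3 m4 m5 m6 m7
  rw [m7, m6, m5, m4, m3, m2, m1]
  ring

lemma moment_of_mgf {Ω : Type*} [MeasurableSpace Ω] {μ : Measure Ω} {L : Ω → ℝ}
    (hL : AEMeasurable L μ)
    (hint : ∀ p : ℕ, Integrable (fun ω => |L ω| ^ p) μ) {K : ℝ → ℝ} (hK : AnalyticAt ℝ K 0)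
    (h : ∀ᶠ t in 𝓝[<] (0:ℝ), Integrable (fun ω => Real.exp (t * L ω)) μ ∧ ∫ ω, Real.exp (t * L ω) ∂μ = Real.exp (K t)) (n : ℕ) :
    ∫ ω, L ω ^ n ∂μ = iteratedDeriv n (fun t => Real.exp (K t)) 0 := by
  obtain ⟨δ, hδ, hh⟩ := (mem_nhdsLT_iff_exists_Ioo_subset).1 h
  simp only [Set.mem_Iio] at hδ
  have hsub : Set.Ioo δ 0 ⊆ interior (integrableExpSet L μ) :=
    interior_maximal (fun t ht => (hh ht).1) isOpen_Ioo
  have hE : AnalyticAt ℝ (fun t => Real.exp (K t)) 0 := hK.rexp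
  have hcont : Tendsto (iteratedDeriv n (fun t => Real.exp (K t))) (𝓝[<] 0) (𝓝 (iteratedDeriv n (fun t => Real.exp (K t)) 0)) :=
    ((hE.iterated_deriv n).continuousAt.tendsto.mono_left nhdsWithin_le_nhds).congr' (by
      rw [iteratedDeriv_eq_iterate]) |>.trans (by rw [iteratedDeriv_eq_iterate])
  have heq : ∀ᶠ t in 𝓝[<] (0:ℝ), iteratedDeriv n (fun t => Real.exp (K t)) t = ∫ ω, L ω ^ n * Real.exp (t * L ω) ∂μ := by
    filter_upwards [Ioo_mem_nhdsLT hδ] with t ht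
    rw [← iteratedDeriv_mgf (hsub ht)]
    apply Filter.EventuallyEq.iteratedDeriv_eq
    filter_upwards [isOpen_Ioo.mem_nhds ht] with u hu
    exact ((hh hu).2).symm
  refine tendsto_nhds_unique ?_ (hcont.congr' heq)
  have hm : δ/2 ∈ Set.Ioo δ 0 := ⟨by linarith, by linarith⟩
  apply tendsto_integral_filter_of_dominated_convergence (fun ω => |L ω|^n + ‖L ω ^ n * Real.exp (δ/2 * L ω)‖)
  · filter_upwards with t
    exact ((hL.pow_const n).mul (Real.measurable_exp.comp_aemeasurable (hL.const_mul t))).aestronglyMeasurable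
  · filter_upwards [Ioo_mem_nhdsLT (by linarith : δ/2 < 0)] with t ht
    filter_upwards with ω
    rw [norm_mul, norm_mul, norm_pow, Real.norm_eq_abs, Real.norm_eq_abs, Real.norm_eq_abs, Real.abs_exp, Real.abs_exp, ← mul_one_add]
    apply mul_le_mul_of_nonneg_left _ (by positivity)
    rcases le_total 0 (L ω) with hl | hl
    · have : Real.exp (t * L ω) ≤ 1 := Real.exp_le_one_iff.2 (mul_nonpos_of_nonpos_of_nonneg ht.2.le hl)
      linarith [Real.exp_pos (δ/2 * L ω)]
    · have : Real.exp (t * L ω) ≤ Real.exp (δ/2 * L ω) := Real.exp_le_exp.2 (mul_le_mul_of_nonpos_right ht.1.le hl)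
      linarith
  · exact (hint n).add (integrable_pow_mul_exp_of_mem_interior_integrableExpSet (hsub hm) n).norm
  · filter_upwards with ω
    have : Continuous (fun t : ℝ => L ω ^ n * Real.exp (t * L ω)) := by fun_prop
    have := this.tendsto 0
    simp only [zero_mul, Real.exp_zero, mul_one] at this
    exact this.mono_left nhdsWithin_le_nhds


lemma gamma_integral_complex {a : ℝ} (ha : 0 < a) {r : ℂ} (hr : 0 < r.re) :
    ∫ t in Set.Ioi (0:ℝ), ((t ^ (a-1) : ℝ) : ℂ) * Complex.exp (-(r * t)) = r ^ (-(a:ℂ)) * (Real.Gamma a : ℂ) := by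
  have hbd : ∀ (b : ℝ) (hb : -1 < b) (x : ℝ) (_ : 0 < x), IntegrableOn (fun t : ℝ => t ^ b * Real.exp (-x * t)) (Set.Ioi 0) := by
    intro b hb x hx
    have := integrableOn_rpow_mul_exp_neg_mul_rpow hb one_pos hx
    simpa using this
  have hmeas : ∀ (b : ℝ) (z : ℂ), AEStronglyMeasurable (fun t : ℝ => ((t ^ b : ℝ) : ℂ) * Complex.exp (-(z * t))) (volume.restrict (Set.Ioi 0)) := by
    intro b z
    apply Measurable.aestronglyMeasurable
    fun_prop
  have hnorm : ∀ (b : ℝ) (z : ℂ) (t : ℝ), 0 < t → ‖((t ^ b : ℝ) : ℂ) * Complex.exp (-(z * t))‖ = t ^ b * Real.exp (-z.re * t) := by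
    intro b z t ht
    rw [norm_mul, Complex.norm_exp, Complex.norm_real, Real.norm_eq_abs, abs_of_nonneg (Real.rpow_nonneg ht.le _)]
    simp
  set U : Set ℂ := {z | 0 < z.re} with hU
  have hUo : IsOpen U := isOpen_lt continuous_const Complex.continuous_re
  have hd1 : DifferentiableOn ℂ (fun z : ℂ => ∫ t in Set.Ioi (0:ℝ), ((t ^ (a-1) : ℝ) : ℂ) * Complex.exp (-(z * t))) U := by
    intro z hz
    have hz' : 0 < z.re := hz
    have hs : {w : ℂ | z.re / 2 < w.re} ∈ 𝓝 z :=
      (isOpen_lt continuous_const Complex.continuous_re).mem_nhds (by simp only [Set.mem_ofPred_eq]; linarith)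
    have := hasDerivAt_integral_of_dominated_loc_of_deriv_le (μ := volume.restrict (Set.Ioi (0:ℝ))) (𝕜 := ℂ)
      (F := fun (z : ℂ) (t : ℝ) => ((t ^ (a-1) : ℝ) : ℂ) * Complex.exp (-(z * t)))
      (F' := fun (z : ℂ) (t : ℝ) => ((t ^ (a-1) : ℝ) : ℂ) * (Complex.exp (-(z * t)) * (-t)))
      (bound := fun t => t ^ a * Real.exp (-(z.re/2) * t)) (x₀ := z) hs ?_ ?_ ?_ ?_ ?_ ?_
    · exact this.2.differentiableAt.differentiableWithinAt
    · exact Eventually.of_forall fun w => hmeas _ w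
    · refine (hbd (a-1) (by linarith) z.re hz').mono' (hmeas _ z) ?_
      filter_upwards [ae_restrict_mem measurableSet_Ioi] with t ht
      exact (hnorm _ _ _ ht).le
    · apply Measurable.aestronglyMeasurable
      fun_prop
    · filter_upwards [ae_restrict_mem measurableSet_Ioi] with t ht w hw
      have ht' : 0 < t := ht
      rw [← mul_assoc, norm_mul, hnorm _ _ _ ht', norm_neg, Complex.norm_real, Real.norm_eq_abs, abs_of_pos ht', mul_right_comm]
      rw [← Real.rpow_add_one ht'.ne', sub_add_cancel]
      apply mul_le_mul_of_nonneg_left _ (Real.rpow_nonneg ht'.le _)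
      apply Real.exp_le_exp.2
      have : z.re / 2 < w.re := hw
      nlinarith
    · exact hbd a (by linarith) _ (by linarith)
    · filter_upwards with t w hw
      have : HasDerivAt (fun w : ℂ => -(w * t)) (-(t:ℂ)) w := by
        exact (hasDerivAt_mul_const (t:ℂ)).fun_neg
      exact this.cexp.const_mul _
  have hd2 : DifferentiableOn ℂ (fun z : ℂ => z ^ (-(a:ℂ)) * (Real.Gamma a : ℂ)) U := by
    intro z hz
    have : z ∈ Complex.slitPlane := Or.inl hz
    exact ((differentiableAt_id.cpow_const this).mul_const _).differentiableWithinAt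
  refine (hd1.analyticOnNhd hUo).eqOn_of_preconnected_of_frequently_eq (hd2.analyticOnNhd hUo)
    (convex_halfSpace_re_gt 0).isPreconnected (z₀ := 1) (by simp [hU]) ?_ hr
  have ht : Tendsto (fun x : ℝ => (x:ℂ)) (𝓝[≠] 1) (𝓝[≠] 1) := by
    apply tendsto_nhdsWithin_of_tendsto_nhds_of_eventually_within
    · have := (Complex.continuous_ofReal.tendsto 1).mono_left (nhdsWithin_le_nhds (s := {1}ᶜ))
      simpa using this
    · filter_upwards [self_mem_nhdsWithin] with x hx
      simpa using hx
  refine ht.frequently (Eventually.frequently ?_)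
  filter_upwards [nhdsWithin_le_nhds (lt_mem_nhds (zero_lt_one))] with x hx
  have := Complex.integral_cpow_mul_exp_neg_mul_Ioi (a := a) (by simpa using ha) hx
  rw [Complex.Gamma_ofReal] at this
  rw [Complex.cpow_neg, ← Complex.inv_cpow, ← one_div, ← this]
  · apply setIntegral_congr_fun measurableSet_Ioi
    intro t ht
    have ht' : 0 ≤ t := le_of_lt ht
    simp only
    rw [Complex.ofReal_cpow ht']
    push_cast; rfl
  · rw [Complex.arg_ofReal_of_nonneg hx.le]; exact Real.pi_pos.ne

lemma J_integral {s α : ℝ} (hs : 0 < s) (hα : 0 < α) {c : ℂ} (hc : 0 < c.re) :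
    ∫ t in Set.Ioi (0:ℝ), ((t ^ (s-1) : ℝ) : ℂ) * Complex.exp (-(c * ((t ^ α : ℝ) : ℂ))) =
      c ^ (-((s/α : ℝ):ℂ)) * ((Real.Gamma (s/α) / α : ℝ) : ℂ) := by
  have h1 := gamma_integral_complex (a := s/α) (by positivity) hc
  rw [← integral_comp_rpow_Ioi_of_pos hα] at h1
  have h2 : ∫ x in Set.Ioi (0:ℝ), (α * x ^ (α - 1)) • ((((x^α) ^ (s/α-1) : ℝ) : ℂ) * Complex.exp (-(c * ((x ^ α : ℝ) : ℂ))))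
    = ∫ t in Set.Ioi (0:ℝ), (α:ℂ) * (((t ^ (s-1) : ℝ) : ℂ) * Complex.exp (-(c * ((t ^ α : ℝ) : ℂ)))) := by
    apply setIntegral_congr_fun measurableSet_Ioi
    intro t ht
    have ht' : 0 < t := ht
    simp only
    rw [Complex.real_smul, ← mul_assoc, ← mul_assoc]
    congr 1
    norm_cast
    rw [mul_assoc, ← Real.rpow_mul ht'.le, ← Real.rpow_add ht']
    congr 2
    field_simp; ring
  rw [h2, integral_const_mul] at h1
  have : (α:ℂ) ≠ 0 := by exact_mod_cast hα.ne'
  rw [eq_comm, ← mul_right_inj' this, h1]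
  push_cast; field_simp

lemma gauss_abs {s : ℝ} (hs : s < 1) :
    Integrable (fun y : ℝ => Real.exp (-y^2) * |y| ^ (-s)) ∧
    ∫ y : ℝ, Real.exp (-y^2) * |y| ^ (-s) = Real.Gamma ((1-s)/2) := by
  have h := integral_comp_abs (f := fun x => Real.exp (-x^2) * x ^ (-s))
  simp only [sq_abs] at h
  have h2 := integral_rpow_mul_exp_neg_mul_rpow (p := 2) (q := -s) (b := 1) two_pos (by linarith) one_pos
  have h3 : ∫ y : ℝ, Real.exp (-y^2) * |y| ^ (-s) = Real.Gamma ((1-s)/2) := by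
    rw [h]
    have : ∫ x in Set.Ioi (0:ℝ), Real.exp (-x^2) * x ^ (-s) = 1/2 * Real.Gamma ((1-s)/2) := by
      rw [show (1-s)/2 = (-s+1)/2 by ring]
      simp only [Real.one_rpow, one_mul, Real.rpow_two, neg_one_mul] at h2
      rw [← h2]; congr 1; funext x; ring
    rw [this]; ring
  refine ⟨?_, h3⟩
  apply Integrable.of_integral_ne_zero
  rw [h3]
  exact (Real.Gamma_pos_of_pos (by linarith)).ne'

lemma gauss_t {s x : ℝ} (hs : 0 < s) (hx : x ≠ 0) :
    ∫ t in Set.Ioi (0:ℝ), t ^ (s-1) * Real.exp (-(t*x)^2/4) = |x| ^ (-s) * (2 ^ (s-1) * Real.Gamma (s/2)) := by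
  have hx2 : 0 < |x| := abs_pos.2 hx
  have h2 := integral_rpow_mul_exp_neg_mul_rpow (p := 2) (q := s-1) (b := (|x|/2)^2) two_pos (by linarith) (by positivity)
  have e : ∀ t : ℝ, t ^ (s-1) * Real.exp (-(t*x)^2/4) = t ^ (s-1) * Real.exp (-(|x|/2)^2 * t^(2:ℝ)) := by
    intro t; rw [Real.rpow_two, div_pow, sq_abs]; congr 2; ring
  simp only [e]
  rw [h2, ← Real.rpow_natCast, ← Real.rpow_mul (by positivity), sub_add_cancel, Real.div_rpow hx2.le two_pos.le]
  have : ((2:ℕ):ℝ) * (-s/2) = -s := by push_cast; ring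
  rw [this, Real.rpow_neg two_pos.le, Real.rpow_sub_one two_ne_zero]
  have := (Real.rpow_pos_of_pos two_pos s).ne'
  field_simp


lemma gauss_cos (u : ℝ) : ∫ y : ℝ, Real.exp (-y^2) * Real.cos (u * y) = Real.sqrt Real.pi * Real.exp (-u^2/4) := by
  have h := fourierIntegral_gaussian (b := 1) (by simp) (u : ℂ)
  have hint : Integrable (fun x : ℝ => Complex.exp (Complex.I * u * x) * Complex.exp (-1 * (x:ℂ)^2)) := by
    apply Integrable.of_integral_ne_zero
    rw [h]
    apply mul_ne_zero _ (Complex.exp_ne_zero _)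
    rw [div_one, Complex.cpow_ne_zero_iff]
    left; exact_mod_cast Real.pi_ne_zero
  have h2 := congrArg Complex.re h
  rw [← RCLike.re_eq_complex_re, ← integral_re hint] at h2
  have e1 : ∀ x : ℝ, RCLike.re (Complex.exp (Complex.I * u * x) * Complex.exp (-1 * (x:ℂ)^2)) = Real.exp (-x^2) * Real.cos (u * x) := by
    intro x
    rw [← Complex.exp_add, RCLike.re_eq_complex_re, Complex.exp_re]
    congr 2
    · simp [← Complex.ofReal_pow]
    · simp [← Complex.ofReal_pow]
  simp only [e1] at h2
  rw [h2, RCLike.re_eq_complex_re]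
  have e2 : ((Real.pi:ℂ)/1) ^ (1/2:ℂ) * Complex.exp (-(u:ℂ)^2/(4*1)) = ((Real.sqrt Real.pi * Real.exp (-u^2/4) : ℝ) : ℂ) := by
    rw [Real.sqrt_eq_rpow]
    push_cast
    rw [Complex.ofReal_cpow Real.pi_pos.le]
    push_cast; simp
  rw [e2, Complex.ofReal_re]

lemma scale_integral {s : ℝ} {k : ℝ → ℝ} (hk : ∀ u, k (-u) = k u) {y : ℝ} (hy : y ≠ 0)
    (hi : IntegrableOn (fun t => t ^ (s-1) * k t) (Set.Ioi 0)) :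
    IntegrableOn (fun t => t ^ (s-1) * k (t*y)) (Set.Ioi 0) ∧
    ∫ t in Set.Ioi (0:ℝ), t ^ (s-1) * k (t*y) = |y| ^ (-s) * ∫ t in Set.Ioi (0:ℝ), t ^ (s-1) * k t := by
  have hy2 : 0 < |y| := abs_pos.2 hy
  have e : Set.EqOn (fun t => t ^ (s-1) * k (t*y)) (fun t => |y| ^ (1-s) * ((|y| * t)^(s-1) * k (|y| * t))) (Set.Ioi 0) := by
    intro t ht
    have ht' : 0 < t := ht
    have : k (t*y) = k (|y| * t) := by
      rcases abs_choice y with h | h <;> rw [h]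
      · rw [mul_comm]
      · rw [neg_mul, hk, mul_comm]
    simp only
    rw [this, Real.mul_rpow hy2.le ht'.le, ← mul_assoc, ← mul_assoc, ← Real.rpow_add hy2]
    simp
  constructor
  · rw [integrableOn_congr_fun e measurableSet_Ioi]
    apply Integrable.const_mul
    have := (integrableOn_Ioi_comp_mul_left_iff (fun t => t ^ (s-1) * k t) 0 hy2).2 (by simpa using hi)
    exact this
  · rw [setIntegral_congr_fun measurableSet_Ioi e, integral_const_mul,
      integral_comp_mul_left_Ioi (fun t => t ^ (s-1) * k t) 0 hy2]
    rw [mul_zero, smul_eq_mul, ← mul_assoc, ← Real.rpow_neg_one, ← Real.rpow_add hy2]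
    congr 2; ring

lemma frac_moment {Ω : Type*} [MeasurableSpace Ω] {μ : Measure Ω} [IsProbabilityMeasure μ]
    {X : Ω → ℝ} (hX : Measurable X) (h0 : ∀ᵐ ω ∂μ, X ω ≠ 0) {h : ℝ → ℝ} (hcont : Continuous h)
    (hev : ∀ u, h (-u) = h u) (hcos : ∀ u, ∫ ω, Real.cos (u * X ω) ∂μ = h u) {s : ℝ} (hs : 0 < s) (hs1 : s < 1)
    (hi : IntegrableOn (fun t => t ^ (s-1) * h t) (Set.Ioi 0)) :
    Integrable (fun ω => |X ω| ^ (-s)) μ ∧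
    (∫ ω, |X ω| ^ (-s) ∂μ) * (2 ^ (s-1) * Real.Gamma (s/2)) * Real.sqrt Real.pi =
      Real.Gamma ((1-s)/2) * ∫ t in Set.Ioi (0:ℝ), t ^ (s-1) * h t := by
  obtain ⟨g1, g2⟩ := gauss_abs hs1
  set ρ : Measure ℝ := volume.restrict (Set.Ioi 0) with hρ
  have hge : Integrable (fun y : ℝ => Real.exp (-y^2)) := by
    simpa using integrable_exp_neg_mul_sq one_pos
  -- H integrable
  have hH : Integrable (fun p : ℝ × ℝ => p.1 ^ (s-1) * (Real.exp (-p.2^2) * h (p.1 * p.2))) (ρ.prod volume) := by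
    have hm : Measurable (fun p : ℝ × ℝ => p.1 ^ (s-1) * (Real.exp (-p.2^2) * h (p.1 * p.2))) := by
      have := hcont.measurable
      fun_prop
    rw [integrable_prod_iff' hm.aestronglyMeasurable]
    have hy : ∀ᵐ y : ℝ, y ≠ 0 := by simp [ae_iff]
    constructor
    · filter_upwards [hy] with y hy
      have := ((scale_integral hev hy hi).1).const_mul (Real.exp (-y^2))
      refine this.congr (Eventually.of_forall fun t => ?_)
      simp only; ring
    · have hia : IntegrableOn (fun t => t ^ (s-1) * |h t|) (Set.Ioi 0) := by
        refine (IntegrableOn.congr_fun hi.norm (fun t ht => ?_) measurableSet_Ioi)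
        rw [norm_mul, Real.norm_eq_abs, Real.norm_eq_abs, abs_of_nonneg (Real.rpow_nonneg (le_of_lt ht) _)]
      have := g1.mul_const (∫ t in Set.Ioi (0:ℝ), t ^ (s-1) * |h t|)
      refine this.congr ?_
      filter_upwards [hy] with y hy
      rw [mul_assoc, ← (scale_integral (k := fun u => |h u|) (fun u => by simp only [hev]) hy hia).2, ← integral_const_mul]
      apply setIntegral_congr_fun measurableSet_Ioi
      intro t ht
      simp only
      rw [norm_mul, norm_mul, Real.norm_eq_abs, Real.norm_eq_abs, Real.norm_eq_abs, abs_of_nonneg (Real.rpow_nonneg (le_of_lt ht) _), Real.abs_exp]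
      ring
  -- inner expectation
  have hE : ∀ t : ℝ, Real.sqrt Real.pi * ∫ ω, Real.exp (-(t * X ω)^2/4) ∂μ = ∫ y : ℝ, Real.exp (-y^2) * h (t*y) := by
    intro t
    rw [← integral_const_mul]
    simp only [← gauss_cos]
    rw [integral_integral_swap]
    · congr 1; funext y
      rw [integral_const_mul, ← hcos]
      congr 2; funext ω; congr 1; ring
    · have hb : Integrable (fun p : Ω × ℝ => Real.exp (-p.2^2)) (μ.prod volume) := hge.comp_snd μ
      refine hb.mono' ?_ (Eventually.of_forall fun p => ?_)
      · apply Measurable.aestronglyMeasurable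
        simp only [Function.uncurry_def]; fun_prop
      · simp only [Function.uncurry_def, norm_mul, Real.norm_eq_abs, Real.abs_exp]
        exact mul_le_of_le_one_right (Real.exp_pos _).le (Real.abs_cos_le_one _)
  have hpi : 0 < Real.sqrt Real.pi := Real.sqrt_pos.2 Real.pi_pos
  have hE2 : ∀ t : ℝ, ∫ ω, t ^ (s-1) * Real.exp (-(t * X ω)^2/4) ∂μ = (Real.sqrt Real.pi)⁻¹ * ∫ y : ℝ, t ^ (s-1) * (Real.exp (-y^2) * h (t*y)) := by
    intro t
    rw [integral_const_mul, integral_const_mul, ← hE]; field_simp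
  have hf : Integrable (fun p : Ω × ℝ => p.2 ^ (s-1) * Real.exp (-(p.2 * X p.1)^2/4)) (μ.prod ρ) := by
    have hm : Measurable (fun p : Ω × ℝ => p.2 ^ (s-1) * Real.exp (-(p.2 * X p.1)^2/4)) := by
      fun_prop
    rw [integrable_prod_iff' hm.aestronglyMeasurable]
    constructor
    · filter_upwards with t
      apply Integrable.const_mul
      refine (integrable_const (1:ℝ)).mono' (Measurable.aestronglyMeasurable (by fun_prop)) (Eventually.of_forall fun ω => ?_)
      rw [Real.norm_eq_abs, Real.abs_exp]
      apply Real.exp_le_one_iff.2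
      nlinarith [sq_nonneg (t * X ω)]
    · refine (hH.integral_prod_left.const_mul (Real.sqrt Real.pi)⁻¹).congr ?_
      filter_upwards [ae_restrict_mem measurableSet_Ioi] with t ht
      rw [← hE2]
      congr 1; funext ω
      rw [norm_mul, Real.norm_eq_abs, Real.norm_eq_abs, Real.abs_exp, abs_of_nonneg (Real.rpow_nonneg (le_of_lt ht) _)]
  have hx : ∀ᵐ ω ∂μ, ∫ t, t ^ (s-1) * Real.exp (-(t * X ω)^2/4) ∂ρ = |X ω| ^ (-s) * (2 ^ (s-1) * Real.Gamma (s/2)) := by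
    filter_upwards [h0] with ω hω
    exact gauss_t hs hω
  have hC : 0 < 2 ^ (s-1) * Real.Gamma (s/2) := mul_pos (Real.rpow_pos_of_pos two_pos _) (Real.Gamma_pos_of_pos (by linarith))
  constructor
  · have := (hf.integral_prod_left.congr hx).mul_const (2 ^ (s-1) * Real.Gamma (s/2))⁻¹
    refine this.congr (Eventually.of_forall fun ω => ?_)
    simp only; field_simp
  · rw [← integral_mul_const, ← integral_congr_ae hx, integral_integral_swap hf]
    simp only [hE2]
    rw [integral_const_mul, integral_integral_swap hH, mul_comm, mul_inv_cancel_left₀ hpi.ne', ← g2, ← integral_mul_const]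
    apply integral_congr_ae
    have hy : ∀ᵐ y : ℝ, y ≠ 0 := by simp [ae_iff]
    filter_upwards [hy] with y hy
    rw [mul_assoc, ← (scale_integral hev hy hi).2, ← integral_const_mul]
    congr 1; funext t; ring


lemma zetaR_two : zetaR 2 = Real.pi^2/6 := by
  unfold zetaR; push_cast; rw [riemannZeta_two]; norm_cast
lemma zetaR_four : zetaR 4 = Real.pi^4/90 := by
  unfold zetaR; push_cast; rw [riemannZeta_four]; norm_cast
lemma zetaR_six : zetaR 6 = Real.pi^6/945 := by
  have b5 : bernoulli' 5 = 0 := bernoulli'_eq_zero_of_odd (by decide) (by norm_num)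
  have b6 : bernoulli' 6 = 1/42 := by
    rw [bernoulli'_def]
    norm_num [Finset.sum_range_succ, b5, Nat.choose]
  have h := riemannZeta_two_mul_nat (k := 3) (by norm_num)
  rw [show 2*3 = 6 by rfl, bernoulli_eq_bernoulli'_of_ne_one (by norm_num), b6] at h
  unfold zetaR; push_cast
  rw [show (2:ℂ) * ((3:ℕ):ℂ) = 6 by norm_num] at h
  have : riemannZeta 6 = ((Real.pi^6/945 : ℝ) : ℂ) := by
    rw [h]; norm_num [Nat.factorial]; ring
  rw [this, Complex.ofReal_re]

lemma cos_Gamma {x : ℝ} (hx : |x| < 1) : Real.cos (Real.pi * x / 2) =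
    Real.Gamma (1 - x/2) * Real.Gamma (1 - -x/2) / (Real.Gamma (1 - x) * Real.Gamma (1 - -x)) := by
  rcases eq_or_ne x 0 with rfl | h0
  · simp
  have hx' := abs_lt.1 hx
  have key : ∀ y : ℝ, y ≠ 0 → |y| < 1 → Real.Gamma (1 - y) * Real.Gamma (1 - -y) * Real.sin (Real.pi * y) = Real.pi * y := by
    intro y hy hy1
    have hy' := abs_lt.1 hy1
    have hs : Real.sin (Real.pi * y) ≠ 0 := by
      intro h
      rw [Real.sin_eq_zero_iff_of_lt_of_lt] at h
      · exact hy (by simpa [Real.pi_ne_zero] using h)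
      · nlinarith [Real.pi_pos]
      · nlinarith [Real.pi_pos]
    have h1 := Real.Gamma_mul_Gamma_one_sub y
    rw [sub_neg_eq_add, add_comm 1 y, Real.Gamma_add_one hy]
    rw [eq_div_iff hs] at h1
    linear_combination y * h1
  have k1 := key x h0 hx
  have k2 := key (x/2) (by simpa using h0) (by rw [abs_div, abs_two]; linarith [abs_nonneg x])
  have e : Real.sin (Real.pi * x) = 2 * Real.sin (Real.pi * (x/2)) * Real.cos (Real.pi * x / 2) := by
    rw [show Real.pi * x = 2 * (Real.pi * (x/2)) by ring, Real.sin_two_mul]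
    congr 2; ring
  have p1 := Real.Gamma_pos_of_pos (by linarith : 0 < 1 - x)
  have p2 := Real.Gamma_pos_of_pos (by linarith : 0 < 1 - -x)
  rw [eq_div_iff (by positivity), neg_div]
  rw [e] at k1
  have hs : Real.sin (Real.pi * (x/2)) ≠ 0 := by
    intro h; rw [h, mul_zero] at k2; exact h0 (by simpa [Real.pi_ne_zero] using k2.symm)
  apply mul_right_cancel₀ hs
  linear_combination k1/2 - k2

noncomputable def Kfun (r θ τ t : ℝ) : ℝ :=
  t * (τ + Real.eulerMascheroniConstant * (1 - r))
    + Real.log (Real.Gamma (1 - r*t)) + Real.log (Real.Gamma (1 - -1*t))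
    - Real.log (Real.Gamma (1 - 1/2*t)) - Real.log (Real.Gamma (1 - -1/2*t))
    + Real.log (Real.Gamma (1 - θ/2*t)) + Real.log (Real.Gamma (1 - -θ/2*t))
    - Real.log (Real.Gamma (1 - θ*t)) - Real.log (Real.Gamma (1 - -θ*t))

noncomputable def kcoef (r θ τ : ℝ) (n : ℕ) : ℝ :=
  (if n = 1 then (τ + Real.eulerMascheroniConstant * (1 - r)) else 0)
    + acoef n * r^n + acoef n * (-1)^n - acoef n * (1/2)^n - acoef n * (-1/2)^n
    + acoef n * (θ/2)^n + acoef n * (-θ/2)^n - acoef n * θ^n - acoef n * (-θ)^n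

lemma Kfun_hasSum (r θ τ : ℝ) : ∀ᶠ z in 𝓝 (0:ℝ), HasSum (fun n => kcoef r θ τ n * z^n) (Kfun r θ τ z) := by
  have hb : ∀ b : ℝ, ∀ᶠ z in 𝓝 (0:ℝ), HasSum (fun n => acoef n * b^n * z^n) (Real.log (Real.Gamma (1 - b*z))) := by
    intro b
    have : Tendsto (fun z : ℝ => |b*z|) (𝓝 0) (𝓝 0) := by
      have : Continuous (fun z : ℝ => |b*z|) := by fun_prop
      simpa using this.tendsto 0
    filter_upwards [this.eventually (gt_mem_nhds one_pos)] with z hz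
    have := log_Gamma_hasSum hz
    simpa only [mul_pow, mul_assoc] using this
  filter_upwards [hb r, hb (-1), hb (1/2), hb (-1/2), hb (θ/2), hb (-θ/2), hb θ, hb (-θ)] with z h1 h2 h3 h4 h5 h6 h7 h8
  have h0 : HasSum (fun n : ℕ => (if n = 1 then (τ + Real.eulerMascheroniConstant * (1 - r)) else 0) * z^n)
      (z * (τ + Real.eulerMascheroniConstant * (1 - r))) := by
    have := hasSum_ite_eq (1:ℕ) (z * (τ + Real.eulerMascheroniConstant * (1 - r)))
    convert! this using 2 with n
    split_ifs with hn
    · subst hn; ring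
    · simp
  have := (((((((h0.add h1).add h2).sub h3).sub h4).add h5).add h6).sub h7).sub h8
  unfold Kfun
  convert! this using 1
  funext n
  unfold kcoef; ring

lemma exp_Kfun {r θ τ s : ℝ} (hr : 0 < r) (hθ : |θ| ≤ 1) (hs : 0 < s) (hs1 : s < 1) {M : ℝ}
    (hM : M * (2 ^ (s-1) * Real.Gamma (s/2)) * Real.sqrt Real.pi = Real.Gamma ((1-s)/2) *
      (Real.exp (-(s * (τ + Real.eulerMascheroniConstant * (1 - r)))) * Real.cos (Real.pi * (θ * s) / 2) * (r * Real.Gamma (r * s)))) :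
    M = Real.exp (Kfun r θ τ (-s)) := by
  have hθs : |θ * s| < 1 := by
    rw [abs_mul, abs_of_pos hs]; nlinarith [abs_nonneg θ]
  have hθs' := abs_lt.1 hθs
  rw [cos_Gamma hθs] at hM
  unfold Kfun
  simp only [Real.exp_add, Real.exp_sub]
  have rs : 0 < r * s := by positivity
  have p1 := Real.Gamma_pos_of_pos (by linarith : 0 < 1 - r * -s)
  have p2 := Real.Gamma_pos_of_pos (by linarith : 0 < 1 - -1 * -s)
  have p3 := Real.Gamma_pos_of_pos (by linarith : 0 < 1 - 1/2 * -s)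
  have p4 := Real.Gamma_pos_of_pos (by linarith : 0 < 1 - -1/2 * -s)
  have p5 := Real.Gamma_pos_of_pos (by linarith : 0 < 1 - θ/2 * -s)
  have p6 := Real.Gamma_pos_of_pos (by linarith : 0 < 1 - -θ/2 * -s)
  have p7 := Real.Gamma_pos_of_pos (by linarith : 0 < 1 - θ * -s)
  have p8 := Real.Gamma_pos_of_pos (by linarith : 0 < 1 - -θ * -s)
  rw [Real.exp_log p1, Real.exp_log p2, Real.exp_log p3, Real.exp_log p4, Real.exp_log p5, Real.exp_log p6, Real.exp_log p7, Real.exp_log p8]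
  have g1 : Real.Gamma (1 - r * -s) = r * s * Real.Gamma (r*s) := by
    rw [← Real.Gamma_add_one rs.ne']; congr 1; ring
  have g3 : Real.Gamma (1 - 1/2 * -s) = s/2 * Real.Gamma (s/2) := by
    rw [← Real.Gamma_add_one (by positivity)]; congr 1; ring
  have g4 := Real.Gamma_mul_Gamma_add_half ((1-s)/2)
  rw [show (1-s)/2 + 1/2 = 1 - -1/2 * -s by ring, show 2 * ((1-s)/2) = 1 - -1 * -s by ring,
    show 1 - (1 - -1 * -s) = s by ring] at g4
  rw [show 1 - θ * s / 2 = 1 - -θ/2 * -s by ring, show 1 - -(θ * s) / 2 = 1 - θ/2 * -s by ring,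
    show 1 - θ * s = 1 - -θ * -s by ring, show 1 - -(θ*s) = 1 - θ * -s by ring,
    show -(s * (τ + Real.eulerMascheroniConstant * (1 - r))) = -s * (τ + Real.eulerMascheroniConstant * (1 - r)) by ring] at hM
  rw [g1, g3]
  have q := Real.Gamma_pos_of_pos (by linarith : 0 < s/2)
  have hpi : 0 < Real.sqrt Real.pi := Real.sqrt_pos.2 Real.pi_pos
  have h2 : (2:ℝ)^(s-1) = 2^s/2 := by rw [Real.rpow_sub_one two_ne_zero]
  have h2p : 0 < (2:ℝ)^s := Real.rpow_pos_of_pos two_pos s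
  rw [h2] at hM
  generalize Real.exp (-s * (τ + Real.eulerMascheroniConstant * (1 - r))) = E at *
  generalize Real.Gamma (1 - -1 * -s) = G2 at *
  generalize Real.Gamma (1 - -1/2 * -s) = G4 at *
  generalize Real.Gamma (1 - θ/2 * -s) = G5 at *
  generalize Real.Gamma (1 - -θ/2 * -s) = G6 at *
  generalize Real.Gamma (1 - θ * -s) = G7 at *
  generalize Real.Gamma (1 - -θ * -s) = G8 at *
  generalize Real.Gamma (s/2) = Q at *
  generalize Real.Gamma (r*s) = R at *
  generalize Real.Gamma ((1-s)/2) = P at *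
  generalize Real.sqrt Real.pi = W at *
  generalize (2:ℝ)^s = T at *
  field_simp at hM ⊢
  apply mul_right_cancel₀ (mul_pos h2p hpi).ne'
  linear_combination G4 * hM + (2*E*G5*G6*r*R)*g4

lemma final_algebra (r θ τ : ℝ) (hr : 0 < r) (ν : ℝ) (hν : ν = r^2) (DV : ℝ) (hDV : DV = Real.pi ^ 2 / 4 * (1 - θ ^ 2) + Real.pi ^ 2 / 6 * (ν - 1)) :
    iteratedDeriv 7 (fun t => Real.exp (Kfun r θ τ t)) 0 = 
      τ ^ 7 + 21 * τ ^ 5 * DV + 70 * τ ^ 4 * zetaR 3 * (ν ^ ((3 : ℝ) / 2) - 1)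
        + 35 * τ ^ 3 * Real.pi ^ 4 * ((1 - θ ^ 4) / 8 + (ν ^ 2 - 1) / 15)
        + 105 * τ * DV ^ 3
        + 420 * τ ^ 2 * zetaR 3 * (ν ^ ((3 : ℝ) / 2) - 1) * DV
        + 504 * τ ^ 2 * zetaR 5 * (ν ^ ((5 : ℝ) / 2) - 1)
        + 210 * zetaR 3 * (ν ^ ((3 : ℝ) / 2) - 1) * DV ^ 2
        + 105 * τ * Real.pi ^ 4 * ((1 - θ ^ 4) / 8 + (ν ^ 2 - 1) / 15) * DV
        + 56 * τ * Real.pi ^ 6 * ((1 - θ ^ 6) / 32 + (ν ^ 3 - 1) / 63)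
        + 504 * zetaR 5 * (ν ^ ((5 : ℝ) / 2) - 1) * DV
        + 70 * zetaR 3 * (ν ^ ((3 : ℝ) / 2) - 1) * Real.pi ^ 4 *
            ((1 - θ ^ 4) / 8 + (ν ^ 2 - 1) / 15)
        + 280 * τ * zetaR 3 ^ 2 * (ν ^ ((3 : ℝ) / 2) - 1) ^ 2
        + 720 * zetaR 7 * (ν ^ ((7 : ℝ) / 2) - 1)
        + 105 * τ ^ 3 * DV ^ 2 := by
  obtain ⟨hK, hd⟩ := iteratedDeriv_of_hasSum (Kfun_hasSum r θ τ)
  rw [exp_seven hK _ hd (by simp [Kfun])]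
  have e : ∀ n : ℕ, ν ^ ((n:ℝ)/2) = r^n := by
    intro n
    rw [hν, ← Real.rpow_natCast, ← Real.rpow_mul hr.le, ← Real.rpow_natCast]; congr 1; push_cast; ring
  have e3 := e 3
  have e5 := e 5
  have e7 := e 7
  norm_num at e3 e5 e7
  rw [e3, e5, e7]
  have k1 : (Nat.factorial 1 : ℝ) * kcoef r θ τ 1 = τ := by
    simp [kcoef, acoef]; ring
  have k2 : (Nat.factorial 2 : ℝ) * kcoef r θ τ 2 = DV := by
    norm_num [kcoef, acoef, zetaR_two, Nat.factorial]; rw [hDV, hν]; ring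
  have k3 : (Nat.factorial 3 : ℝ) * kcoef r θ τ 3 = 2 * zetaR 3 * (r^3 - 1) := by
    norm_num [kcoef, acoef, Nat.factorial]; ring
  have k4 : (Nat.factorial 4 : ℝ) * kcoef r θ τ 4 = Real.pi ^ 4 * ((1 - θ ^ 4) / 8 + (ν ^ 2 - 1) / 15) := by
    norm_num [kcoef, acoef, zetaR_four, Nat.factorial]; rw [hν]; ring
  have k5 : (Nat.factorial 5 : ℝ) * kcoef r θ τ 5 = 24 * zetaR 5 * (r^5 - 1) := by
    norm_num [kcoef, acoef, Nat.factorial]; ring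
  have k6 : (Nat.factorial 6 : ℝ) * kcoef r θ τ 6 = 8 * Real.pi ^ 6 * ((1 - θ ^ 6) / 32 + (ν ^ 3 - 1) / 63) := by
    norm_num [kcoef, acoef, zetaR_six, Nat.factorial]; rw [hν]; ring
  have k7 : (Nat.factorial 7 : ℝ) * kcoef r θ τ 7 = 720 * zetaR 7 * (r^7 - 1) := by
    norm_num [kcoef, acoef, Nat.factorial]; ring
  rw [k1, k2, k3, k4, k5, k6, k7]
  ring


lemma h_integral {r θ τ s : ℝ} (hr : 0 < r) (hθr : |θ| < r) (hs : 0 < s) {p q : ℝ}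
    (hp : p = r⁻¹ * τ + Real.eulerMascheroniConstant * (r⁻¹ - 1)) (hq : q = -(r⁻¹ * (Real.pi / 2) * θ))
    {c : ℂ} (hc : c = Complex.exp (p + q * Complex.I)) :
    0 < c.re ∧ IntegrableOn (fun t : ℝ => t^(s-1) * (Complex.exp (-(c * ((|t|^(r⁻¹) : ℝ) : ℂ)))).re) (Set.Ioi 0) ∧
    ∫ t in Set.Ioi (0:ℝ), t^(s-1) * (Complex.exp (-(c * ((|t|^(r⁻¹) : ℝ) : ℂ)))).re =
      Real.exp (-(s * (τ + Real.eulerMascheroniConstant * (1 - r)))) * Real.cos (Real.pi * (θ * s) / 2) * (r * Real.Gamma (r * s)) := by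
  have hri : 0 < r⁻¹ := by positivity
  have hq2 : |q| < Real.pi / 2 := by
    rw [hq, abs_neg, abs_mul, abs_mul, abs_of_pos hri, abs_of_pos (by positivity : 0 < Real.pi/2)]
    have : r⁻¹ * |θ| < 1 := by
      rw [inv_mul_lt_iff₀ hr]; linarith
    nlinarith [Real.pi_pos]
  have hq3 := abs_lt.1 hq2
  have hcre : 0 < c.re := by
    rw [hc, Complex.exp_re]
    apply mul_pos (Real.exp_pos _)
    simp
    exact Real.cos_pos_of_mem_Ioo ⟨hq3.1, hq3.2⟩
  have hmeas : Measurable (fun t : ℝ => t^(s-1) * (Complex.exp (-(c * ((|t|^(r⁻¹) : ℝ) : ℂ)))).re) := by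
    have : Measurable (fun t : ℝ => Complex.exp (-(c * ((|t|^(r⁻¹) : ℝ) : ℂ)))) := by
      fun_prop
    exact (measurable_id.pow_const _).mul (Complex.measurable_re.comp this)
  have hmeasc : Measurable (fun t : ℝ => ((t^(s-1):ℝ):ℂ) * Complex.exp (-(c * ((t^(r⁻¹) : ℝ) : ℂ)))) := by
    fun_prop
  have hdom := integrableOn_rpow_mul_exp_neg_mul_rpow (p := r⁻¹) (s := s-1) (b := c.re) (by linarith) hri hcre
  have hic : IntegrableOn (fun t : ℝ => ((t^(s-1):ℝ):ℂ) * Complex.exp (-(c * ((t^(r⁻¹) : ℝ) : ℂ)))) (Set.Ioi 0) := by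
    refine Integrable.mono' hdom hmeasc.aestronglyMeasurable ?_
    refine (ae_restrict_iff' measurableSet_Ioi).2 (ae_of_all _ fun t ht => ?_)
    have ht : 0 < t := ht
    rw [norm_mul, Complex.norm_exp, Complex.norm_real, Real.norm_of_nonneg (by positivity)]
    simp
  have hre : ∀ t ∈ Set.Ioi (0:ℝ), (((t^(s-1):ℝ):ℂ) * Complex.exp (-(c * ((t^(r⁻¹) : ℝ) : ℂ)))).re =
      t^(s-1) * (Complex.exp (-(c * ((|t|^(r⁻¹) : ℝ) : ℂ)))).re := by
    intro t ht
    have ht : 0 < t := ht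
    rw [abs_of_pos ht, Complex.re_ofReal_mul]
  have hire := hic.re
  refine ⟨hcre, ?_, ?_⟩
  · exact (integrableOn_congr_fun (fun t ht => hre t ht) measurableSet_Ioi).1 hire
  · rw [← setIntegral_congr_fun measurableSet_Ioi hre]
    have e1 := integral_re hic
    have e2 : ∫ t in Set.Ioi (0:ℝ), (((t^(s-1):ℝ):ℂ) * Complex.exp (-(c * ((t^(r⁻¹) : ℝ) : ℂ)))).re = 
      (∫ t in Set.Ioi (0:ℝ), ((t^(s-1):ℝ):ℂ) * Complex.exp (-(c * ((t^(r⁻¹) : ℝ) : ℂ)))).re := e1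
    rw [e2, J_integral hs hri hcre, mul_comm, Complex.re_ofReal_mul]
    have hc0 : c ≠ 0 := by rw [hc]; exact Complex.exp_ne_zero _
    rw [Complex.cpow_def_of_ne_zero hc0]
    have hl : Complex.log c = p + q * Complex.I := by
      rw [hc, Complex.log_exp]
      · simp; linarith [Real.pi_pos]
      · simp; linarith [Real.pi_pos]
    rw [hl]
    have e3 : ((p:ℂ) + q * Complex.I) * (-((s / r⁻¹ : ℝ):ℂ)) = ((-(s * (τ + Real.eulerMascheroniConstant * (1 - r))):ℝ):ℂ) + ((Real.pi * (θ * s) / 2 : ℝ):ℂ) * Complex.I := by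
      have p1 : p * (s / r⁻¹) = s * (τ + Real.eulerMascheroniConstant * (1 - r)) := by
        rw [hp]; field_simp
      have q1 : q * (s / r⁻¹) = - (Real.pi * (θ * s) / 2) := by
        rw [hq]; field_simp
      rw [← p1, show Real.pi * (θ * s) / 2 = - (q * (s / r⁻¹)) by rw [q1]; ring]
      push_cast; ring
    rw [e3, Complex.exp_re]
    simp only [Complex.add_re, Complex.add_im, Complex.ofReal_re, Complex.ofReal_im, Complex.re_ofReal_mul, Complex.im_ofReal_mul, Complex.I_re, Complex.I_im]
    rw [show s / r⁻¹ = r * s by field_simp, div_inv_eq_mul]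
    ring_nf

lemma log_mgf {Ω : Type*} [MeasurableSpace Ω] {μ : Measure Ω} [IsProbabilityMeasure μ] {X : Ω → ℝ} {r θ τ s : ℝ}
    (hX : Measurable X) (h0 : ∀ᵐ ω ∂μ, X ω ≠ 0) (hr : 0 < r) (hθ1 : |θ| ≤ 1) (hθr : |θ| < r) (hs : 0 < s) (hs1 : s < 1)
    (hcf : ∀ k : ℝ, 0 < k → ∫ ω, Complex.exp (Complex.I * (k : ℂ) * (X ω : ℂ)) ∂μ =
      Complex.exp (-(Complex.exp (((r⁻¹ * τ + Real.eulerMascheroniConstant * (r⁻¹ - 1) : ℝ):ℂ) + ((-(r⁻¹ * (Real.pi / 2) * θ):ℝ):ℂ) * Complex.I) * ((k^(r⁻¹):ℝ):ℂ)))) :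
    Integrable (fun ω => Real.exp (-s * Real.log |X ω|)) μ ∧ ∫ ω, Real.exp (-s * Real.log |X ω|) ∂μ = Real.exp (Kfun r θ τ (-s)) := by
  obtain ⟨hc, hi, hI⟩ := h_integral (τ := τ) hr hθr hs rfl rfl rfl
  set c := Complex.exp (((r⁻¹ * τ + Real.eulerMascheroniConstant * (r⁻¹ - 1) : ℝ):ℂ) + ((-(r⁻¹ * (Real.pi / 2) * θ):ℝ):ℂ) * Complex.I) with hcdef
  have hri : 0 < r⁻¹ := by positivity
  have hcont : Continuous (fun t : ℝ => (Complex.exp (-(c * ((|t|^(r⁻¹) : ℝ) : ℂ)))).re) := by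
    have : Continuous (fun t : ℝ => |t|^(r⁻¹)) := continuous_abs.rpow_const (fun _ => Or.inr hri.le)
    fun_prop
  have hpos : ∀ u : ℝ, 0 < u → ∫ ω, Real.cos (u * X ω) ∂μ = (Complex.exp (-(c * ((|u|^(r⁻¹) : ℝ) : ℂ)))).re := by
    intro u hu
    rw [abs_of_pos hu, ← hcf u hu]
    have hint : Integrable (fun ω => Complex.exp (Complex.I * (u : ℂ) * (X ω : ℂ))) μ := by
      refine Integrable.of_bound (C := 1) (by fun_prop) (ae_of_all _ fun ω => ?_)
      rw [Complex.norm_exp]; simp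
    have e1 := integral_re hint
    refine Eq.trans (integral_congr_ae (ae_of_all _ fun ω => ?_)) e1
    show Real.cos (u * X ω) = (Complex.exp (Complex.I * (u : ℂ) * (X ω : ℂ))).re
    rw [show Complex.I * (u : ℂ) * (X ω : ℂ) = ((u * X ω : ℝ):ℂ) * Complex.I by push_cast; ring, Complex.exp_ofReal_mul_I_re]
  have hcos : ∀ u : ℝ, ∫ ω, Real.cos (u * X ω) ∂μ = (Complex.exp (-(c * ((|u|^(r⁻¹) : ℝ) : ℂ)))).re := by
    intro u
    rcases lt_trichotomy u 0 with hu | hu | hu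
    · have := hpos (-u) (by linarith)
      simpa only [neg_mul, Real.cos_neg, abs_neg] using this
    · subst hu
      simp [Real.zero_rpow hri.ne']
    · exact hpos u hu
  obtain ⟨g1, g2⟩ := frac_moment hX h0 hcont (by intro u; simp only [abs_neg]) hcos hs hs1 hi
  rw [hI] at g2
  have g3 := exp_Kfun hr hθ1 hs hs1 g2
  have hae : (fun ω => |X ω|^(-s)) =ᵐ[μ] fun ω => Real.exp (-s * Real.log |X ω|) := by
    filter_upwards [h0] with ω hω
    rw [Real.rpow_def_of_pos (abs_pos.2 hω), mul_comm]
  exact ⟨g1.congr hae, by rw [← integral_congr_ae hae, g3]⟩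

lemma degenerate {Ω : Type*} [MeasurableSpace Ω] {μ : Measure Ω} [IsProbabilityMeasure μ] {X : Ω → ℝ} {a : ℝ}
    (hX : Measurable X) 
    (hcf : ∀ k : ℝ, ∫ ω, Complex.exp (Complex.I * (k : ℂ) * (X ω : ℂ)) ∂μ = Complex.exp (Complex.I * k * a)) :
    ∀ᵐ ω ∂μ, X ω = a := by
  have : μ.map X = Measure.dirac a := by
    have := Measure.isProbabilityMeasure_map (μ := μ) hX.aemeasurable
    apply Measure.ext_of_charFun
    funext t
    rw [charFun_apply_real, charFun_dirac, integral_map hX.aemeasurable (by fun_prop)]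
    have := hcf t
    convert! this using 1
    · congr 1; funext ω; congr 1; ring
    · congr 1; simp; ring
  have h2 : ∀ᵐ x ∂(μ.map X), x = a := by
    rw [this]; exact (ae_dirac_iff (p := fun x => x = a) (measurableSet_singleton a)).2 rfl
  exact ae_of_ae_map hX.aemeasurable h2

end Helpers

theorem seventh_log_moment_of_strictlyStable {Ω : Type*} [MeasureSpace Ω]
    [IsProbabilityMeasure (ℙ : Measure Ω)] (X : Ω → ℝ) (ν θ τ : ℝ)
    (hX : IsStrictlyStable X ν θ τ)
    (DV : ℝ) (hDV : DV = Real.pi ^ 2 / 4 * (1 - θ ^ 2) + Real.pi ^ 2 / 6 * (ν - 1)) :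
    (∫ ω, (Real.log |X ω|) ^ 7) =
      τ ^ 7 + 21 * τ ^ 5 * DV + 70 * τ ^ 4 * zetaR 3 * (ν ^ ((3 : ℝ) / 2) - 1)
        + 35 * τ ^ 3 * Real.pi ^ 4 * ((1 - θ ^ 4) / 8 + (ν ^ 2 - 1) / 15)
        + 105 * τ * DV ^ 3
        + 420 * τ ^ 2 * zetaR 3 * (ν ^ ((3 : ℝ) / 2) - 1) * DV
        + 504 * τ ^ 2 * zetaR 5 * (ν ^ ((5 : ℝ) / 2) - 1)
        + 210 * zetaR 3 * (ν ^ ((3 : ℝ) / 2) - 1) * DV ^ 2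
        + 105 * τ * Real.pi ^ 4 * ((1 - θ ^ 4) / 8 + (ν ^ 2 - 1) / 15) * DV
        + 56 * τ * Real.pi ^ 6 * ((1 - θ ^ 6) / 32 + (ν ^ 3 - 1) / 63)
        + 504 * zetaR 5 * (ν ^ ((5 : ℝ) / 2) - 1) * DV
        + 70 * zetaR 3 * (ν ^ ((3 : ℝ) / 2) - 1) * Real.pi ^ 4 *
            ((1 - θ ^ 4) / 8 + (ν ^ 2 - 1) / 15)
        + 280 * τ * zetaR 3 ^ 2 * (ν ^ ((3 : ℝ) / 2) - 1) ^ 2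
        + 720 * zetaR 7 * (ν ^ ((7 : ℝ) / 2) - 1)
        + 105 * τ ^ 3 * DV ^ 2 := by
  obtain ⟨hm, hν, hθ, h0, hint, hcf⟩ := hX
  have h0' : ∀ᵐ ω ∂(ℙ : Measure Ω), X ω ≠ 0 := by
    rw [ae_iff]; simpa using h0
  have hθ1 : |θ| ≤ 1 := hθ.trans (min_le_left _ _)
  have hθ2 : |θ| ≤ 2 * Real.sqrt ν - 1 := hθ.trans (min_le_right _ _)
  have hν0 : 0 < ν := by linarith
  have hr : 0 < Real.sqrt ν := Real.sqrt_pos.2 hν0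
  have hνr : ν = Real.sqrt ν ^ 2 := (Real.sq_sqrt hν0.le).symm
  have ha : ν ^ (-(1/2) : ℝ) = (Real.sqrt ν)⁻¹ := by
    rw [Real.rpow_neg hν0.le, Real.sqrt_eq_rpow]
  rw [ha] at hcf
  by_cases hlt : |θ| < Real.sqrt ν
  · rw [← final_algebra (Real.sqrt ν) θ τ hr ν hνr DV hDV]
    refine moment_of_mgf (L := fun ω => Real.log |X ω|) (by fun_prop) hint
      (iteratedDeriv_of_hasSum (Kfun_hasSum (Real.sqrt ν) θ τ)).1 ?_ 7
    have hev : ∀ᶠ t in nhdsWithin (0:ℝ) (Set.Iio 0), t ∈ Set.Ioo (-1:ℝ) 0 :=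
      Ioo_mem_nhdsLT (by norm_num)
    filter_upwards [hev] with t ht
    have key := log_mgf (s := -t) (τ := τ) hm h0' hr hθ1 hlt (by linarith [ht.2]) (by linarith [ht.1]) ?_
    · simpa only [neg_neg] using key
    · intro k hk
      rw [hcf k hk.ne', Real.sign_of_pos hk, abs_of_pos hk]
      congr 2
      rw [Real.rpow_def_of_pos hk, Complex.ofReal_exp, ← Complex.exp_add]
      congr 1
      push_cast
      ring
  · have hr1 : Real.sqrt ν = 1 := by
      push Not at hlt
      linarith
    have hν1 : ν = 1 := by rw [hνr, hr1]; norm_num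
    have hθa : |θ| = 1 := by rw [hr1] at hlt; linarith [not_lt.1 hlt]
    have hθs : θ ^ 2 = 1 := by rw [← sq_abs, hθa]; norm_num
    have hX : ∀ᵐ ω ∂(ℙ : Measure Ω), X ω = θ * Real.exp τ := by
      apply degenerate hm
      intro k
      by_cases hk : k = 0
      · subst hk; simp
      · rw [hcf k hk, hr1]
        congr 1
        have hsk : (|k| : ℝ) * Real.sign k = k := by
          rcases lt_or_gt_of_ne hk with h | h
          · rw [abs_of_neg h, Real.sign_of_neg h]; ring
          · rw [abs_of_pos h, Real.sign_of_pos h]; ring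
        have hsg : θ * Real.sign k = 1 ∨ θ * Real.sign k = -1 := by
          have hsq : (θ * Real.sign k) ^ 2 = 1 := by
            rcases lt_or_gt_of_ne hk with h | h
            · rw [Real.sign_of_neg h, mul_pow, hθs]; norm_num
            · rw [Real.sign_of_pos h, mul_pow, hθs]; norm_num
          simpa using hsq
        have hsplit : (((1:ℝ)⁻¹ : ℝ) : ℂ) *
            (((Real.log |k| : ℝ) : ℂ) + (τ : ℂ) -
              Complex.I * ((Real.pi / 2 : ℝ) : ℂ) * (θ : ℂ) * ((Real.sign k : ℝ) : ℂ)) +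
          ((Real.eulerMascheroniConstant : ℝ) : ℂ) * ((((1:ℝ)⁻¹ : ℝ) : ℂ) - 1) =
            ((Real.log |k| : ℝ) : ℂ) + (τ : ℂ) + ((-(Real.pi / 2 * (θ * Real.sign k)) : ℝ) : ℂ) * Complex.I := by
          push_cast
          simp
          ring
        have hE : Complex.exp (((-(Real.pi / 2 * (θ * Real.sign k)) : ℝ) : ℂ) * Complex.I) =
            -(((θ * Real.sign k : ℝ) : ℂ) * Complex.I) := by
          rw [Complex.exp_mul_I, ← Complex.ofReal_cos, ← Complex.ofReal_sin]
          rcases hsg with h | h <;> rw [h] <;> simp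
        rw [hsplit, Complex.exp_add, Complex.exp_add, hE, ← Complex.ofReal_exp, ← Complex.ofReal_exp,
          Real.exp_log (abs_pos.2 hk)]
        have : (k : ℂ) = ((|k| * Real.sign k : ℝ) : ℂ) := by rw [hsk]
        rw [this]
        push_cast
        ring
    have hL : ∀ᵐ ω ∂(ℙ : Measure Ω), (Real.log |X ω|) ^ 7 = τ ^ 7 := by
      filter_upwards [hX] with ω hω
      rw [hω, abs_mul, hθa, one_mul, abs_of_pos (Real.exp_pos _), Real.log_exp]
    rw [integral_congr_ae hL]
    have hDV0 : DV = 0 := by rw [hDV, hθs, hν1]; ring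
    have h4 : θ ^ 4 = 1 := by rw [show θ ^ 4 = (θ ^ 2) ^ 2 by ring, hθs]; norm_num
    have h6 : θ ^ 6 = 1 := by rw [show θ ^ 6 = (θ ^ 2) ^ 3 by ring, hθs]; norm_num
    rw [hDV0, h4, h6, hν1]
    simp
end

section
/- Let X be a strictly stable random variable with parameters (ν, θ, τ) and write V̄ = log|X| − τ. Then E[V̄³] = 2ζ(3)(ν^{3/2} − 1), E[V̄⁴] = π⁴((1 − θ⁴)/8 + (ν² − 1)/15) + 3·DV², and E[V̄⁵] = 20ζ(3)(ν^{3/2} − 1)·DV + 24ζ(5)(ν^{5/2} − 1). -/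
open MeasureTheory ProbabilityTheory

lemma poly_coeff_zero (n : ℕ) : ∀ a : ℕ → ℝ,
    (fun s : ℝ => ∑ i ∈ Finset.range n, a i * s ^ i) =O[nhdsWithin 0 (Set.Ioi 0)] (fun s : ℝ => s ^ n) →
    ∀ i < n, a i = 0 := by
  induction n with
  | zero => intro a _ i hi; omega
  | succ n ih =>
    intro a h
    have h0 : a 0 = 0 := by
      have t1 : Filter.Tendsto (fun s : ℝ => ∑ i ∈ Finset.range (n+1), a i * s ^ i)
          (nhdsWithin 0 (Set.Ioi 0)) (nhds 0) := by
        apply h.trans_tendsto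
        have : Filter.Tendsto (fun s : ℝ => s ^ (n+1)) (nhds 0) (nhds (0 ^ (n+1))) :=
          (continuous_pow (n+1)).tendsto 0
        simp only [ne_eq, Nat.succ_ne_zero, not_false_eq_true, zero_pow] at this
        exact this.mono_left nhdsWithin_le_nhds
      have t2 : Filter.Tendsto (fun s : ℝ => ∑ i ∈ Finset.range (n+1), a i * s ^ i)
          (nhdsWithin 0 (Set.Ioi 0)) (nhds (a 0)) := by
        have c : Continuous (fun s : ℝ => ∑ i ∈ Finset.range (n+1), a i * s ^ i) := by fun_prop
        have := c.tendsto 0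
        rw [Finset.sum_range_succ'] at this
        simp at this
        exact this.mono_left nhdsWithin_le_nhds
      exact tendsto_nhds_unique t2 t1
    have h1 := ih (fun i => a (i+1)) (by
      have e : (fun s : ℝ => s⁻¹) =O[nhdsWithin 0 (Set.Ioi 0)] (fun s : ℝ => s⁻¹) :=
        Asymptotics.isBigO_refl _ _
      refine (e.mul h).congr' ?_ ?_
      · filter_upwards [self_mem_nhdsWithin] with s hs
        have : s ≠ 0 := ne_of_gt hs
        rw [Finset.sum_range_succ', h0]
        simp only [zero_mul, add_zero, Finset.mul_sum]
        refine Finset.sum_congr rfl fun i _ => ?_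
        rw [pow_succ]
        field_simp
      · filter_upwards [self_mem_nhdsWithin] with s hs
        have : s ≠ 0 := ne_of_gt hs
        rw [pow_succ]
        field_simp)
    intro i hi
    rcases i with _ | i
    · exact h0
    · exact h1 i (by omega)

noncomputable def zs (k : ℕ) : ℝ := ∑' n : ℕ, 1 / ((n : ℝ) + 1) ^ k

lemma zs_summable (k : ℕ) (hk : 1 < k) : Summable (fun n : ℕ => 1 / ((n : ℝ) + 1) ^ k) := by
  have := (summable_nat_add_iff 1).mpr (Real.summable_one_div_nat_pow.mpr hk)
  simpa using this

lemma zs_eq (k : ℕ) (hk : 1 < k) : zetaR k = zs k := by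
  have h := zeta_nat_eq_tsum_of_gt_one hk
  unfold zetaR zs
  have e : (((k:ℝ)):ℂ) = (k:ℂ) := by simp
  rw [e, h]
  have : (∑' n : ℕ, 1 / (n : ℂ) ^ k) = ((∑' n : ℕ, 1 / (n : ℝ) ^ k : ℝ) : ℂ) := by
    rw [Complex.ofReal_tsum]; simp
  rw [this, Complex.ofReal_re, (Real.summable_one_div_nat_pow.mpr hk).tsum_eq_zero_add]
  have : k ≠ 0 := by omega
  simp [this]

lemma zs_two : zs 2 = Real.pi ^ 2 / 6 := by
  have := hasSum_zeta_two
  rw [← this.tsum_eq, this.summable.tsum_eq_zero_add]; simp [zs]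

lemma zs_four : zs 4 = Real.pi ^ 4 / 90 := by
  have := hasSum_zeta_four
  rw [← this.tsum_eq, this.summable.tsum_eq_zero_add]; simp [zs]

noncomputable def lq (y : ℝ) : ℝ := y - y^2/2 + y^3/3 - y^4/4 + y^5/5

lemma log_lq (y : ℝ) (hy : 0 < y) (hy' : y ≤ 1/2) : |Real.log (1+y) - lq y| ≤ 2 * y^6 := by
  have h := Real.abs_log_sub_add_sum_range_le (x := -y) (by rw [abs_neg, abs_of_pos hy]; linarith) 5
  rw [abs_neg, abs_of_pos hy] at h
  have e : (∑ i ∈ Finset.range 5, (-y)^(i+1)/((i:ℝ)+1)) + Real.log (1 - -y) = Real.log (1+y) - lq y := by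
    simp [Finset.sum_range_succ, lq]; ring
  rw [e] at h
  refine h.trans ?_
  rw [div_le_iff₀ (by linarith)]
  have : 0 < y^6 := by positivity
  norm_num
  nlinarith

lemma logGamma_expand (x : ℝ) (hx : 0 < x) (hx' : x ≤ 1/2) :
    |Real.log (Real.Gamma (1 + x)) -
      (-Real.eulerMascheroniConstant * x + zs 2 / 2 * x^2 - zs 3 / 3 * x^3 + zs 4 / 4 * x^4
        - zs 5 / 5 * x^5)| ≤ 2 * zs 6 * x^6 := by
  have h1 : Filter.Tendsto (fun n : ℕ => x * Real.log n - ∑ m ∈ Finset.range n, Real.log (1 + x / (m+1)))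
      Filter.atTop (nhds (Real.log (Real.Gamma (1+x)))) := by
    have h := (Real.BohrMollerup.tendsto_log_gamma hx).add_const (Real.log x)
    have e : Real.log (Real.Gamma x) + Real.log x = Real.log (Real.Gamma (1+x)) := by
      rw [add_comm 1 x, Real.Gamma_add_one hx.ne', Real.log_mul hx.ne' (Real.Gamma_pos_of_pos hx).ne']
      ring
    rw [e] at h
    refine h.congr fun n => ?_
    unfold Real.BohrMollerup.logGammaSeq
    rw [Finset.sum_range_succ']
    have : Real.log (n.factorial : ℝ) = ∑ m ∈ Finset.range n, Real.log ((m:ℝ)+1) := by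
      rw [← Finset.prod_range_add_one_eq_factorial]
      push_cast
      rw [Real.log_prod]
      intro i _; positivity
    rw [this]
    have : ∑ m ∈ Finset.range n, Real.log (1 + x / ((m:ℝ)+1)) =
      ∑ m ∈ Finset.range n, Real.log (x + ((m+1 : ℕ):ℝ)) - ∑ m ∈ Finset.range n, Real.log ((m:ℝ)+1) := by
      rw [← Finset.sum_sub_distrib]
      refine Finset.sum_congr rfl fun m _ => ?_
      rw [← Real.log_div (by positivity) (by positivity)]
      congr 1
      push_cast
      field_simp
      ring
    rw [this]
    simp
    ring
  have hk (k : ℕ) (hk : 1 < k) : Filter.Tendsto (fun n : ℕ => ∑ m ∈ Finset.range n, 1 / ((m:ℝ)+1)^k)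
      Filter.atTop (nhds (zs k)) := (zs_summable k hk).hasSum.tendsto_sum_nat
  have h2 : Filter.Tendsto (fun n : ℕ => x * Real.log n - ∑ m ∈ Finset.range n, lq (x / (m+1)))
      Filter.atTop (nhds (-Real.eulerMascheroniConstant * x + zs 2 / 2 * x^2 - zs 3 / 3 * x^3 + zs 4 / 4 * x^4
        - zs 5 / 5 * x^5)) := by
    have := ((((Real.tendsto_harmonic_sub_log.mul_const (-x)).add
      ((hk 2 (by norm_num)).mul_const (x^2/2))).sub ((hk 3 (by norm_num)).mul_const (x^3/3))).add
      ((hk 4 (by norm_num)).mul_const (x^4/4))).sub ((hk 5 (by norm_num)).mul_const (x^5/5))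
    convert this using 1
    · ext n
      have e : ((harmonic n : ℚ) : ℝ) = ∑ m ∈ Finset.range n, 1 / ((m:ℝ)+1) := by
        simp [harmonic]
      rw [e]
      have : ∑ m ∈ Finset.range n, lq (x / ((m:ℝ)+1)) =
        (∑ m ∈ Finset.range n, 1 / ((m:ℝ)+1)) * x - (∑ m ∈ Finset.range n, 1 / ((m:ℝ)+1)^2) * (x^2/2)
        + (∑ m ∈ Finset.range n, 1 / ((m:ℝ)+1)^3) * (x^3/3) - (∑ m ∈ Finset.range n, 1 / ((m:ℝ)+1)^4) * (x^4/4)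
        + (∑ m ∈ Finset.range n, 1 / ((m:ℝ)+1)^5) * (x^5/5) := by
        simp only [Finset.sum_mul]
        rw [← Finset.sum_sub_distrib, ← Finset.sum_add_distrib, ← Finset.sum_sub_distrib, ← Finset.sum_add_distrib]
        refine Finset.sum_congr rfl fun m _ => ?_
        unfold lq
        field_simp
      rw [this]
      ring
    · congr 1; ring
  refine le_of_tendsto (h1.sub h2).abs (Filter.Eventually.of_forall fun n => ?_)
  have : x * Real.log n - ∑ m ∈ Finset.range n, Real.log (1 + x / ((m:ℝ)+1)) - (x * Real.log n - ∑ m ∈ Finset.range n, lq (x / (m+1)))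
     = - ∑ m ∈ Finset.range n, (Real.log (1 + x / ((m:ℝ)+1)) - lq (x / (m+1))) := by
    rw [Finset.sum_sub_distrib]; ring
  rw [this, abs_neg]
  refine (Finset.abs_sum_le_sum_abs _ _).trans ?_
  calc _ ≤ ∑ m ∈ Finset.range n, 2 * x^6 * (1 / ((m:ℝ)+1)^6) := by
        refine Finset.sum_le_sum fun m _ => ?_
        have := log_lq (x / ((m:ℝ)+1)) (by positivity) (by
          refine le_trans (div_le_self hx.le (by linarith [(Nat.cast_nonneg m : (0:ℝ) ≤ m)])) hx')
        refine this.trans (le_of_eq ?_)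
        rw [div_pow]; ring
    _ = 2 * x^6 * ∑ m ∈ Finset.range n, (1 / ((m:ℝ)+1)^6) := by rw [Finset.mul_sum]
    _ ≤ 2 * x^6 * zs 6 := by
        gcongr
        exact (zs_summable 6 (by norm_num)).sum_le_tsum _ (fun i _ => by positivity)
    _ = _ := by ring

lemma cos_expand (x : ℝ) (hx : |x| ≤ 1) : |Real.cos x - (1 - x^2/2 + x^4/24)| ≤ 3 * x^6 := by
  have h := Complex.norm_exp_sub_sum_le_norm_mul_exp (x * Complex.I) 6
  have h2 := (Complex.abs_re_le_norm _).trans h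
  have e : (Complex.exp (x * Complex.I) - ∑ m ∈ Finset.range 6, (x * Complex.I)^m / (m.factorial : ℂ)).re
     = Real.cos x - (1 - x^2/2 + x^4/24) := by
    rw [Complex.sub_re, Complex.exp_ofReal_mul_I_re]
    congr 1
    have : (∑ m ∈ Finset.range 6, ((x:ℂ) * Complex.I)^m / (m.factorial : ℂ)) =
      ((1 - x^2/2 + x^4/24 : ℝ):ℂ) + ((x - x^3/6 + x^5/120 : ℝ):ℂ) * Complex.I := by
      simp [Finset.sum_range_succ, Nat.factorial, mul_pow]
      ring
    rw [this]
    simp only [Complex.add_re, Complex.re_ofReal_mul, Complex.ofReal_re, Complex.I_re]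
    ring
  rw [e] at h2
  refine h2.trans ?_
  simp only [norm_mul, Complex.norm_real, Complex.norm_I, mul_one, Real.norm_eq_abs]
  have : |x|^6 = x^6 := by rw [← abs_pow]; exact abs_of_nonneg (by positivity)
  rw [this, mul_comm]
  have h3 : Real.exp |x| ≤ 3 := (Real.exp_le_exp.mpr hx).trans (by linarith [Real.exp_one_lt_d9])
  gcongr

def E6 (f g : ℝ → ℝ) : Prop :=
  (fun s : ℝ => f s - g s) =O[nhdsWithin 0 (Set.Ioi 0)] (fun s : ℝ => s ^ 6)

lemma bdd_of_cont {P : ℝ → ℝ} (hP : Continuous P) :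
    P =O[nhdsWithin 0 (Set.Ioi 0)] (fun _ : ℝ => (1:ℝ)) :=
  ((hP.tendsto 0).mono_left nhdsWithin_le_nhds).isBigO_one ℝ

lemma pow_bigO {m n : ℕ} (h : n ≤ m) :
    (fun s : ℝ => s ^ m) =O[nhdsWithin 0 (Set.Ioi 0)] (fun s : ℝ => s ^ n) := by
  have := (Asymptotics.isBigO_refl (fun s : ℝ => s ^ n) (nhdsWithin 0 (Set.Ioi 0))).mul
    (bdd_of_cont (continuous_pow (m-n)))
  refine this.congr (fun s => ?_) (fun s => ?_)
  · rw [← pow_add]; congr 1; omega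
  · simp

lemma E6.trans {f g h : ℝ → ℝ} (a : E6 f g) (b : E6 g h) : E6 f h := by
  refine (a.add b).congr_left fun s => ?_
  ring

lemma E6.symm {f g : ℝ → ℝ} (a : E6 f g) : E6 g f := by
  refine a.neg_left.congr_left fun s => ?_
  ring

lemma E6.mul {f g P Q : ℝ → ℝ} (a : E6 f P) (b : E6 g Q) (hP : Continuous P) (hQ : Continuous Q) :
    E6 (fun s => f s * g s) (fun s => P s * Q s) := by
  have hf : f =O[nhdsWithin 0 (Set.Ioi 0)] (fun _ : ℝ => (1:ℝ)) := by
    have h1 : (fun s : ℝ => f s - P s) =O[nhdsWithin 0 (Set.Ioi 0)] (fun _ : ℝ => (1:ℝ)) :=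
      Asymptotics.IsBigO.trans a (bdd_of_cont (continuous_pow 6))
    refine (h1.add (bdd_of_cont hP)).congr_left fun s => ?_
    ring
  have h1 := (Asymptotics.IsBigO.mul a (bdd_of_cont hQ)).add (by simpa using hf.mul b)
  unfold E6
  refine (h1.congr (fun s => ?_) (fun s => ?_))
  · ring
  · simp

lemma E6_cos (c : ℝ) : E6 (fun s => Real.cos (c * s)) (fun s => 1 - c^2/2 * s^2 + c^4/24*s^4) := by
  have ht : Filter.Tendsto (fun s : ℝ => |c * s|) (nhdsWithin 0 (Set.Ioi 0)) (nhds 0) := by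
    have : Continuous (fun s : ℝ => |c * s|) := by fun_prop
    have := this.tendsto 0
    simp only [mul_zero, abs_zero] at this
    exact this.mono_left nhdsWithin_le_nhds
  refine Asymptotics.IsBigO.of_bound (3 * c^6) ?_
  filter_upwards [ht.eventually_le_const (show (0:ℝ) < 1 by norm_num), self_mem_nhdsWithin] with s h hs
  have := cos_expand (c*s) h
  have hs : 0 < s := hs
  rw [Real.norm_eq_abs, Real.norm_eq_abs, abs_of_pos (pow_pos hs 6)]
  refine le_trans (le_of_eq ?_) (this.trans (le_of_eq ?_))
  · congr 1; ring
  · ring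

noncomputable def lgp (x : ℝ) : ℝ := -Real.eulerMascheroniConstant * x + zs 2 / 2 * x^2 - zs 3 / 3 * x^3 + zs 4 / 4 * x^4
        - zs 5 / 5 * x^5

lemma E6_lg (c : ℝ) (hc : 0 < c) : E6 (fun s => Real.log (Real.Gamma (1 + c * s))) (fun s => lgp (c * s)) := by
  have ht : Filter.Tendsto (fun s : ℝ => c * s) (nhdsWithin 0 (Set.Ioi 0)) (nhds 0) := by
    have : Continuous (fun s : ℝ => c * s) := by fun_prop
    have := this.tendsto 0
    simp at this
    exact this.mono_left nhdsWithin_le_nhds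
  refine Asymptotics.IsBigO.of_bound (2 * zs 6 * c^6) ?_
  filter_upwards [ht.eventually_le_const (show (0:ℝ) < 1/2 by norm_num), self_mem_nhdsWithin] with s h hs
  have hs : 0 < s := hs
  have := logGamma_expand (c*s) (by positivity) h
  rw [Real.norm_eq_abs, Real.norm_eq_abs, abs_of_pos (pow_pos hs 6)]
  refine this.trans (le_of_eq ?_)
  ring

lemma E6_exp (L r : ℝ → ℝ) (hr : Continuous r) (h : E6 L (fun s => s^2 * r s)) :
    E6 (fun s => Real.exp (L s)) (fun s => 1 + s^2 * r s + (s^2 * r s)^2/2) := by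
  have hL : L =O[nhdsWithin 0 (Set.Ioi 0)] (fun s : ℝ => s^2) := by
    have h1 := Asymptotics.IsBigO.trans h (pow_bigO (show 2 ≤ 6 by norm_num))
    have h2 := (Asymptotics.isBigO_refl (fun s : ℝ => s ^ 2) (nhdsWithin 0 (Set.Ioi 0))).mul (bdd_of_cont hr)
    simp only [mul_one] at h2
    refine (h1.add h2).congr_left fun s => ?_
    ring
  have ht : Filter.Tendsto L (nhdsWithin 0 (Set.Ioi 0)) (nhds 0) := by
    apply hL.trans_tendsto
    have := (continuous_pow (M := ℝ) 2).tendsto 0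
    simp at this
    exact this.mono_left nhdsWithin_le_nhds
  have h1 := (Real.exp_sub_sum_range_isBigO_pow 3).comp_tendsto ht
  have h2 : E6 (fun s => Real.exp (L s)) (fun s => 1 + L s + (L s)^2/2) := by
    have h3 : (fun s => L s ^ 3) =O[nhdsWithin 0 (Set.Ioi 0)] (fun s : ℝ => s^6) := by
      refine (hL.pow 3).congr_right fun s => ?_
      ring
    refine (h1.trans h3).congr_left fun s => ?_
    simp [Finset.sum_range_succ]
  refine h2.trans ?_
  have h4 := E6.mul h h (by fun_prop) (by fun_prop)
  have := Asymptotics.IsBigO.add h (h4.const_mul_left (1/2))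
  refine this.congr_left fun s => ?_
  ring

lemma match_coeffs (M : ℝ → ℝ) (m : ℕ → ℝ) (β θ DV : ℝ) (hβ : 0 < β) (m0 : m 0 = 1)
    (hM : E6 M (fun s => ∑ i ∈ Finset.range 6, (-s)^i / (i.factorial : ℝ) * m i))
    (hE : ∀ᶠ s in nhdsWithin (0:ℝ) (Set.Ioi 0), M s * Real.cos (Real.pi / 2 * s) =
      Real.cos (Real.pi / 2 * θ * s) * Real.exp (Real.log (Real.Gamma (1 + β * s))
        - Real.log (Real.Gamma (1 + s)) - Real.eulerMascheroniConstant * (1 - β) * s))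
    (hDV : DV = Real.pi ^ 2 / 4 * (1 - θ ^ 2) + Real.pi ^ 2 / 6 * (β^2 - 1)) :
    m 3 = 2 * zs 3 * (β^3 - 1) ∧
    m 4 = Real.pi ^ 4 * ((1 - θ ^ 4) / 8 + (β ^ 4 - 1) / 15) + 3 * DV ^ 2 ∧
    m 5 = 20 * zs 3 * (β^3 - 1) * DV + 24 * zs 5 * (β^5 - 1) := by
  obtain ⟨c2, hc2⟩ : ∃ c, c = zs 2 / 2 * (β^2 - 1) := ⟨_, rfl⟩
  obtain ⟨c3, hc3⟩ : ∃ c, c = - zs 3 / 3 * (β^3 - 1) := ⟨_, rfl⟩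
  obtain ⟨c4, hc4⟩ : ∃ c, c = zs 4 / 4 * (β^4 - 1) := ⟨_, rfl⟩
  obtain ⟨c5, hc5⟩ : ∃ c, c = - zs 5 / 5 * (β^5 - 1) := ⟨_, rfl⟩
  have hL : E6 (fun s => Real.log (Real.Gamma (1 + β * s))
        - Real.log (Real.Gamma (1 + s)) - Real.eulerMascheroniConstant * (1 - β) * s)
        (fun s => s^2 * (c2 + c3 * s + c4 * s^2 + c5 * s^3)) := by
    refine (Asymptotics.IsBigO.sub (E6_lg β hβ) (E6_lg 1 one_pos)).congr_left fun s => ?_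
    simp only [lgp, hc2, hc3, hc4, hc5, one_mul]
    ring
  have h1 := E6.mul (E6_cos (Real.pi / 2 * θ)) (E6_exp _ _ (by fun_prop) hL) (by fun_prop) (by fun_prop)
  have h2 := E6.mul hM (E6_cos (Real.pi / 2)) (by fun_prop) (by fun_prop)
  have h3 : E6 (fun s => M s * Real.cos (Real.pi / 2 * s)) (fun s => Real.cos (Real.pi / 2 * θ * s) * Real.exp (Real.log (Real.Gamma (1 + β * s))
        - Real.log (Real.Gamma (1 + s)) - Real.eulerMascheroniConstant * (1 - β) * s)) := by
    refine (Asymptotics.isBigO_zero (E' := ℝ) _ _).congr' ?_ Filter.EventuallyEq.rfl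
    filter_upwards [hE] with s hs
    rw [hs]; simp
  have h4 := (h2.symm.trans h3).trans h1
  obtain ⟨u, hu⟩ : ∃ u, u = (Real.pi / 2)^2/2 := ⟨_, rfl⟩
  obtain ⟨v, hv⟩ : ∃ v, v = (Real.pi / 2)^4/24 := ⟨_, rfl⟩
  obtain ⟨u', hu'⟩ : ∃ u, u = (Real.pi / 2 * θ)^2/2 := ⟨_, rfl⟩
  obtain ⟨v', hv'⟩ : ∃ v, v = (Real.pi / 2 * θ)^4/24 := ⟨_, rfl⟩
  rw [← hu, ← hv, ← hu', ← hv'] at h4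
  let a : ℕ → ℝ := fun i => match i with
    | 0 => 0
    | 1 => - m 1
    | 2 => m 2 / 2 - u - (c2 - u')
    | 3 => - m 3 / 6 + u * m 1 - c3
    | 4 => m 4 / 24 - u * m 2 / 2 + v - (c4 + c2^2/2 - u' * c2 + v')
    | 5 => - m 5 / 120 + u * m 3 / 6 - v * m 1 - (c5 + c2 * c3 - u' * c3)
    | _ => 0
  obtain ⟨q, hq, hqe⟩ : ∃ q : ℝ → ℝ, Continuous q ∧ ∀ s : ℝ,
      ((∑ i ∈ Finset.range 6, (-s)^i / (i.factorial : ℝ) * m i) * (1 - u * s^2 + v * s^4)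
      - (1 - u' * s^2 + v' * s^4) * (1 + s^2 * (c2 + c3 * s + c4 * s^2 + c5 * s^3) + (s^2 * (c2 + c3 * s + c4 * s^2 + c5 * s^3))^2/2))
      = ∑ i ∈ Finset.range 6, a i * s^i + s^6 * q s := by
    refine ⟨fun s => (-u * (m 4/24 - m 5/120 * s) + v * (m 2/2 - m 3/6 * s + m 4/24*s^2 - m 5/120*s^3))
      - ((c3 * c3/2 + c2 * c4) + (c2*c5 + c3*c4) * s + (c4*c4/2+c3*c5) * s^2 + c4*c5*s^3 + c5*c5/2*s^4
       - u' * ((c4 + c2^2/2) + (c5 + c2 * c3) * s + (c3 * c3/2 + c2 * c4)*s^2 + (c2*c5 + c3*c4) * s^3 + (c4*c4/2+c3*c5) * s^4 + c4*c5*s^5 + c5*c5/2*s^6)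
       + v' * (c2 + c3 * s + (c4 + c2^2/2) * s^2 + (c5 + c2 * c3) * s^3 + (c3 * c3/2 + c2 * c4)*s^4 + (c2*c5 + c3*c4) * s^5 + (c4*c4/2+c3*c5) * s^6 + c4*c5*s^7 + c5*c5/2*s^8)), by fun_prop, fun s => ?_⟩
    simp only [Finset.sum_range_succ, Finset.sum_range_zero, Nat.factorial, a, m0]
    push_cast
    ring
  have h5 : (fun s : ℝ => ∑ i ∈ Finset.range 6, a i * s ^ i) =O[nhdsWithin 0 (Set.Ioi 0)] (fun s : ℝ => s ^ 6) := by
    have h6 := (Asymptotics.isBigO_refl (fun s : ℝ => s ^ 6) (nhdsWithin 0 (Set.Ioi 0))).mul (bdd_of_cont hq)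
    simp only [mul_one] at h6
    refine (Asymptotics.IsBigO.sub h4 h6).congr_left fun s => ?_
    rw [hqe]; ring
  have h7 := poly_coeff_zero 6 a h5
  have a1 : - m 1 = 0 := h7 1 (by norm_num)
  have a2 : m 2 / 2 - u - (c2 - u') = 0 := h7 2 (by norm_num)
  have a3 : - m 3 / 6 + u * m 1 - c3 = 0 := h7 3 (by norm_num)
  have a4 : m 4 / 24 - u * m 2 / 2 + v - (c4 + c2^2/2 - u' * c2 + v') = 0 := h7 4 (by norm_num)
  have a5 : - m 5 / 120 + u * m 3 / 6 - v * m 1 - (c5 + c2 * c3 - u' * c3) = 0 := h7 5 (by norm_num)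
  have b1 : m 1 = 0 := by linarith
  have b2 : m 2 = 2 * (u + c2 - u') := by linarith
  have b3 : m 3 = -6 * c3 := by rw [b1] at a3; linarith
  rw [b2] at a4
  rw [b3, b1] at a5
  rw [zs_two] at hc2
  rw [zs_four] at hc4
  refine ⟨by rw [b3, hc3]; ring, ?_, ?_⟩
  · have : m 4 = 24 * (u * (u + c2 - u') - v + (c4 + c2^2/2 - u' * c2 + v')) := by linarith
    rw [this, hDV, hc2, hc4, hu, hu', hv, hv']; ring
  · have : m 5 = 120 * (-u * c3 - (c5 + c2 * c3 - u' * c3)) := by linarith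
    rw [this, hDV, hc2, hc3, hc5, hu, hu']; ring

lemma int_rpow_exp (a b : ℝ) (ha : 0 < a) (hb : 0 < b) :
    IntegrableOn (fun t : ℝ => t^(a-1) * Real.exp (-(b * t))) (Set.Ioi 0) := by
  have := integrableOn_rpow_mul_exp_neg_mul_rpow (p := 1) (s := a-1) (b := b) (by linarith) one_pos hb
  simpa [Real.rpow_one] using this

lemma kernel_meas (a : ℝ) (r : ℂ) : AEStronglyMeasurable (fun t : ℝ => ((t^(a-1) : ℝ) : ℂ) * Complex.exp (-(r * t)))
    (volume.restrict (Set.Ioi 0)) := by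
  apply Measurable.aestronglyMeasurable
  fun_prop

lemma kernel_norm (a : ℝ) (r : ℂ) (t : ℝ) (ht : 0 < t) : ‖((t^(a-1) : ℝ) : ℂ) * Complex.exp (-(r * t))‖ =
    t^(a-1) * Real.exp (-(r.re * t)) := by
  rw [norm_mul, Complex.norm_real, Complex.norm_exp, Real.norm_of_nonneg (Real.rpow_nonneg ht.le _)]
  simp

lemma kernel_int (a : ℝ) (ha : 0 < a) (r : ℂ) (hr : 0 < r.re) :
    IntegrableOn (fun t : ℝ => ((t^(a-1) : ℝ) : ℂ) * Complex.exp (-(r * t))) (Set.Ioi 0) := by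
  refine Integrable.mono' (int_rpow_exp a r.re ha hr) (kernel_meas a r) ?_
  filter_upwards [ae_restrict_mem measurableSet_Ioi] with t ht
  rw [kernel_norm a r t ht]

lemma gamma_complex (a : ℝ) (ha : 0 < a) (r : ℂ) (hr : 0 < r.re) :
    ∫ t in Set.Ioi (0:ℝ), ((t^(a-1) : ℝ) : ℂ) * Complex.exp (-(r * t)) =
      Complex.exp (-(a * Complex.log r)) * (Real.Gamma a : ℂ) := by
  let U : Set ℂ := {z | 0 < z.re}
  have hU : IsOpen U := isOpen_lt continuous_const Complex.continuous_re
  have hUc : IsPreconnected U := (convex_halfSpace_re_gt 0).isPreconnected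
  have d1 : DifferentiableOn ℂ (fun r : ℂ => ∫ t in Set.Ioi (0:ℝ), ((t^(a-1) : ℝ) : ℂ) * Complex.exp (-(r * t))) U := by
    intro r0 hr0
    have hr0 : 0 < r0.re := hr0
    refine DifferentiableAt.differentiableWithinAt ?_
    refine (hasDerivAt_integral_of_dominated_loc_of_deriv_le (𝕜 := ℂ) (s := {z | r0.re / 2 < z.re})
      (bound := fun t => t^((a+1)-1) * Real.exp (-((r0.re/2) * t)))
      (F' := fun r t => ((t^(a-1) : ℝ) : ℂ) * (Complex.exp (-(r * t)) * (-t)))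
      ?_ ?_ ?_ ?_ ?_ ?_ ?_).2.differentiableAt
    · exact (isOpen_lt continuous_const Complex.continuous_re).mem_nhds (by simp; linarith)
    · exact Filter.Eventually.of_forall fun r => kernel_meas a r
    · exact kernel_int a ha r0 hr0
    · apply Measurable.aestronglyMeasurable
      fun_prop
    · filter_upwards [ae_restrict_mem measurableSet_Ioi] with t ht r hr
      have ht : 0 < t := ht
      have hr : r0.re / 2 < r.re := hr
      rw [← mul_assoc, norm_mul, kernel_norm a r t ht, norm_neg, Complex.norm_real, Real.norm_of_nonneg ht.le,
        add_sub_cancel_right]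
      have e : t^a = t^(a-1) * t := by
        rw [← Real.rpow_add_one ht.ne']; congr 1; ring
      rw [e, mul_assoc, mul_assoc, mul_comm t]
      gcongr
    · exact int_rpow_exp (a+1) (r0.re/2) (by linarith) (by linarith)
    · refine Filter.Eventually.of_forall fun t r _ => ?_
      have h : HasDerivAt (fun r : ℂ => -(r * t)) (-(1 * t)) r := ((hasDerivAt_id r).mul_const _).neg
      have := (h.cexp).const_mul ((t^(a-1) : ℝ) : ℂ)
      simpa using this
  have d2 : DifferentiableOn ℂ (fun r : ℂ => Complex.exp (-(a * Complex.log r)) * (Real.Gamma a : ℂ)) U := by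
    intro r0 hr0
    have : r0 ∈ Complex.slitPlane := Or.inl hr0
    refine DifferentiableAt.differentiableWithinAt ?_
    have := Complex.differentiableAt_log this
    fun_prop
  have key := (d1.analyticOnNhd hU).eqOn_of_preconnected_of_frequently_eq (d2.analyticOnNhd hU) hUc
    (z₀ := 1) (by simp [U]) ?_
  · exact key hr
  · have hx : ∀ x : ℝ, 0 < x → (∫ t in Set.Ioi (0:ℝ), ((t^(a-1) : ℝ) : ℂ) * Complex.exp (-((x:ℂ) * t))) =
      Complex.exp (-(a * Complex.log (x:ℂ))) * (Real.Gamma a : ℂ) := by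
      intro x hx
      have h := Real.integral_rpow_mul_exp_neg_mul_Ioi ha hx
      have e : ∀ t : ℝ, ((t^(a-1) : ℝ) : ℂ) * Complex.exp (-((x:ℂ) * t)) = ((t^(a-1) * Real.exp (-(x*t)) : ℝ) : ℂ) := by
        intro t; push_cast; rfl
      simp_rw [e]
      rw [integral_complex_ofReal, h, Complex.ofReal_mul, ← Complex.ofReal_log hx.le, Real.rpow_def_of_pos (by positivity)]
      congr 1
      rw [one_div, Real.log_inv]
      push_cast
      congr 1; ring
    have ht : Filter.Tendsto (fun n : ℕ => (((1 + 1/((n:ℝ)+1) : ℝ)) : ℂ)) Filter.atTop (nhdsWithin 1 {1}ᶜ) := by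
      refine tendsto_nhdsWithin_iff.mpr ⟨?_, Filter.Eventually.of_forall fun n => ?_⟩
      · have := (tendsto_one_div_add_atTop_nhds_zero_nat (𝕜 := ℝ)).const_add 1
        rw [add_zero] at this
        have := (Complex.continuous_ofReal.tendsto 1).comp this
        exact this
      · intro h
        have h : (((1 + 1/((n:ℝ)+1) : ℝ)) : ℂ) = 1 := h
        have h : (1 + 1/((n:ℝ)+1) : ℝ) = 1 := by exact_mod_cast h
        have : 0 < 1/((n:ℝ)+1) := by positivity
        linarith
    exact ht.frequently (Filter.Frequently.of_forall fun n => hx _ (by positivity))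

/-- Mellin transform of the stable characteristic function. -/
lemma mellin_stable (s α : ℝ) (hs : 0 < s) (hα : 0 < α) (B : ℂ) (hB : 0 < B.re) :
    ∫ k in Set.Ioi (0:ℝ), ((k^(s-1) : ℝ) : ℂ) * Complex.exp (-(B * ((k^α : ℝ) : ℂ))) =
      (1/α : ℝ) * (Complex.exp (-((s/α : ℝ) * Complex.log B)) * (Real.Gamma (s/α) : ℂ)) := by
  rw [← gamma_complex (s/α) (by positivity) B hB, ← integral_comp_rpow_Ioi_of_pos (g := fun t : ℝ => ((t^(s/α-1) : ℝ) : ℂ) * Complex.exp (-(B * t))) hα, ← integral_const_mul]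
  refine setIntegral_congr_fun measurableSet_Ioi fun k hk => ?_
  have hk : 0 < k := hk
  simp only [Complex.real_smul]
  rw [← mul_assoc, ← mul_assoc, ← Complex.ofReal_mul, ← Complex.ofReal_mul]
  congr 2
  rw [← Real.rpow_mul hk.le]
  have : k^(s-1) = k^(α-1) * k^(α*(s/α-1)) := by
    rw [← Real.rpow_add hk]; congr 1; field_simp; ring
  rw [this]; field_simp

lemma stable_int (s α b : ℝ) (hs : 0 < s) (hα : 0 < α) (hb : 0 < b) :
    IntegrableOn (fun t : ℝ => t^(s-1) * Real.exp (-(b * t^α))) (Set.Ioi 0) := by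
  have := integrableOn_rpow_mul_exp_neg_mul_rpow (p := α) (s := s-1) (b := b) (by linarith) hα hb
  simpa using this

noncomputable def Gk (s ε x : ℝ) : ℝ := (Complex.exp (-(s * Complex.log ((ε:ℂ) - Complex.I * x)))).re

lemma Gk_eq (s ε x : ℝ) : Gk s ε x = Real.exp (-(s * Real.log ‖(ε:ℂ) - Complex.I * x‖)) *
    Real.cos (s * Complex.arg ((ε:ℂ) - Complex.I * x)) := by
  unfold Gk
  rw [Complex.exp_re]
  congr 1
  · congr 1
    rw [Complex.neg_re, Complex.re_ofReal_mul, Complex.log_re]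
  · rw [Complex.neg_im, Complex.im_ofReal_mul, Complex.log_im, Real.cos_neg]

lemma Gk_nonneg (s ε x : ℝ) (hs : 0 < s) (hs1 : s < 1) (hε : 0 ≤ ε) : 0 ≤ Gk s ε x := by
  rw [Gk_eq]
  have h : |Complex.arg ((ε:ℂ) - Complex.I * x)| ≤ Real.pi / 2 :=
    Complex.abs_arg_le_pi_div_two_iff.mpr (by simpa using hε)
  have h2 := abs_le.mp h
  have hp := Real.pi_pos
  refine mul_nonneg (Real.exp_pos _).le (Real.cos_nonneg_of_mem_Icc ⟨?_, ?_⟩) <;> nlinarith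

lemma Gk_le (s ε x : ℝ) (hs : 0 < s) (hx : x ≠ 0) :
    |Gk s ε x| ≤ Real.exp (-(s * Real.log |x|)) := by
  rw [Gk_eq, abs_mul, abs_of_pos (Real.exp_pos _)]
  have h1 : |x| ≤ ‖(ε:ℂ) - Complex.I * x‖ := by
    have := Complex.abs_im_le_norm ((ε:ℂ) - Complex.I * x)
    simpa using this
  have h2 : Real.log |x| ≤ Real.log ‖(ε:ℂ) - Complex.I * x‖ := Real.log_le_log (abs_pos.mpr hx) h1
  calc _ ≤ Real.exp (-(s * Real.log ‖(ε:ℂ) - Complex.I * x‖)) * 1 := by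
        gcongr; exact Real.abs_cos_le_one _
    _ ≤ _ := by rw [mul_one]; gcongr

lemma Gk_zero (s x : ℝ) (hx : x ≠ 0) : Gk s 0 x = Real.exp (-(s * Real.log |x|)) * Real.cos (Real.pi / 2 * s) := by
  rw [Gk_eq]
  congr 1
  · simp
  · rcases lt_or_gt_of_ne hx with h | h
    · have : (((0:ℝ):ℂ) - Complex.I * x) = ((-x : ℝ) : ℂ) * Complex.I := by push_cast; ring
      rw [this, Complex.arg_real_mul _ (by linarith), Complex.arg_I, mul_comm]
    · have : (((0:ℝ):ℂ) - Complex.I * x) = ((x : ℝ) : ℂ) * (-Complex.I) := by push_cast; ring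
      rw [this, Complex.arg_real_mul _ h, Complex.arg_neg_I, ← Real.cos_neg]; congr 1; ring

lemma Gk_tendsto (s x : ℝ) (hx : x ≠ 0) (e : ℕ → ℝ) (he : Filter.Tendsto e Filter.atTop (nhds 0)) :
    Filter.Tendsto (fun n => Gk s (e n) x) Filter.atTop (nhds (Gk s 0 x)) := by
  have hc : ContinuousAt (fun ε : ℝ => Gk s ε x) 0 := by
    unfold Gk
    have hm : (((0:ℝ):ℂ) - Complex.I * x) ∈ Complex.slitPlane := by
      refine Or.inr ?_; simpa using hx
    have h1 : ContinuousAt (fun ε : ℝ => ((ε:ℂ) - Complex.I * x)) 0 := by fun_prop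
    have h2 := h1.clog hm
    have h3 : ContinuousAt (fun ε : ℝ => Complex.exp (-(s * Complex.log ((ε:ℂ) - Complex.I * x)))) 0 := by fun_prop
    exact Complex.continuous_re.continuousAt.comp h3
  exact hc.tendsto.comp he

lemma Gk_meas (s ε : ℝ) : Measurable (Gk s ε) := by unfold Gk; fun_prop

section
variable {Ω : Type*} [MeasureSpace Ω] [IsProbabilityMeasure (ℙ : Measure Ω)]

lemma reg_identity (X : Ω → ℝ) (hX : Measurable X) (s : ℝ) (hs : 0 < s) (ε : ℝ) (hε : 0 < ε) :
    Integrable (fun ω => Gk s ε (X ω)) ∧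
    (∫ ω, Gk s ε (X ω)) * Real.Gamma s =
      (∫ k in Set.Ioi (0:ℝ), ((k^(s-1) * Real.exp (-(ε * k)) : ℝ) : ℂ) *
        ∫ ω, Complex.exp (Complex.I * (k:ℂ) * (X ω : ℂ))).re := by
  have hint : Integrable (Function.uncurry fun (ω : Ω) (k : ℝ) =>
      ((k^(s-1) : ℝ) : ℂ) * Complex.exp (-(((ε:ℂ) - Complex.I * X ω) * k)))
      ((ℙ : Measure Ω).prod (volume.restrict (Set.Ioi (0:ℝ)))) := by
    refine Integrable.mono' ((int_rpow_exp s ε hs hε).comp_snd (ℙ : Measure Ω)) ?_ ?_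
    · apply Measurable.aestronglyMeasurable
      unfold Function.uncurry
      fun_prop
    · have : ∀ᵐ p : Ω × ℝ ∂((ℙ : Measure Ω).prod (volume.restrict (Set.Ioi (0:ℝ)))), p.2 ∈ Set.Ioi (0:ℝ) :=
        Measure.quasiMeasurePreserving_snd.ae (ae_restrict_mem measurableSet_Ioi)
      filter_upwards [this] with p hp
      simp only [Function.uncurry]
      rw [kernel_norm s _ p.2 hp]
      simp
  have hsw := integral_integral_swap hint
  have hin := hint.integral_prod_left
  have e : ∀ ω, (∫ k in Set.Ioi (0:ℝ), ((k^(s-1) : ℝ) : ℂ) * Complex.exp (-(((ε:ℂ) - Complex.I * X ω) * k))) =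
      Complex.exp (-(s * Complex.log ((ε:ℂ) - Complex.I * X ω))) * (Real.Gamma s : ℂ) := fun ω =>
    gamma_complex s hs _ (by simpa using hε)
  simp only [Function.uncurry] at hin
  simp_rw [e] at hsw hin
  have hΓ : (Real.Gamma s : ℂ) ≠ 0 := by exact_mod_cast (Real.Gamma_pos_of_pos hs).ne'
  have hin2 : Integrable (fun ω => Complex.exp (-(s * Complex.log ((ε:ℂ) - Complex.I * X ω)))) := by
    refine (hin.mul_const ((Real.Gamma s : ℂ)⁻¹)).congr (Filter.Eventually.of_forall fun ω => ?_)
    simp only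
    rw [mul_assoc, mul_inv_cancel₀ hΓ, mul_one]
  refine ⟨hin2.re, ?_⟩
  have h1 : (∫ ω, Gk s ε (X ω)) = (∫ ω, Complex.exp (-(s * Complex.log ((ε:ℂ) - Complex.I * X ω)))).re :=
    integral_re hin2
  rw [h1, ← Complex.re_mul_ofReal, ← integral_mul_const, hsw]
  congr 1
  refine integral_congr_ae (Filter.Eventually.of_forall fun k => ?_)
  simp only
  rw [← integral_const_mul]
  refine integral_congr_ae (Filter.Eventually.of_forall fun ω => ?_)
  simp only
  push_cast
  rw [mul_assoc, ← Complex.exp_add]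
  congr 2
  ring

lemma frac_moment_s13 (X : Ω → ℝ) (hX : Measurable X) (hX0 : (ℙ : Measure Ω) {ω | X ω = 0} = 0)
    (α : ℝ) (hα : 0 < α) (B : ℂ) (hB : 0 < B.re)
    (hφ : ∀ k : ℝ, 0 < k → (∫ ω, Complex.exp (Complex.I * (k:ℂ) * (X ω : ℂ))) =
      Complex.exp (-(B * ((k^α : ℝ) : ℂ))))
    (s : ℝ) (hs : 0 < s) (hs1 : s < 1) :
    Integrable (fun ω => Real.exp (-(s * Real.log |X ω|))) ∧
    (∫ ω, Real.exp (-(s * Real.log |X ω|))) * Real.cos (Real.pi / 2 * s) * Real.Gamma s =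
      ((1/α : ℝ) * (Complex.exp (-((s/α : ℝ) * Complex.log B)) * (Real.Gamma (s/α) : ℂ))).re := by
  let e : ℕ → ℝ := fun n => 1 / ((n:ℝ)+1)
  have he : Filter.Tendsto e Filter.atTop (nhds 0) := tendsto_one_div_add_atTop_nhds_zero_nat
  have hepos : ∀ n, 0 < e n := fun n => by positivity
  have hne : ∀ᵐ ω : Ω, X ω ≠ 0 := by
    rw [ae_iff]; simpa using hX0
  -- right-hand side limit
  have hJ : Filter.Tendsto (fun n => (∫ k in Set.Ioi (0:ℝ), ((k^(s-1) * Real.exp (-(e n * k)) : ℝ) : ℂ) *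
        ∫ ω, Complex.exp (Complex.I * (k:ℂ) * (X ω : ℂ)))) Filter.atTop
        (nhds (∫ k in Set.Ioi (0:ℝ), ((k^(s-1) : ℝ) : ℂ) * Complex.exp (-(B * ((k^α : ℝ) : ℂ))))) := by
    have : ∀ n, (∫ k in Set.Ioi (0:ℝ), ((k^(s-1) * Real.exp (-(e n * k)) : ℝ) : ℂ) *
        ∫ ω, Complex.exp (Complex.I * (k:ℂ) * (X ω : ℂ))) =
        ∫ k in Set.Ioi (0:ℝ), ((k^(s-1) * Real.exp (-(e n * k)) : ℝ) : ℂ) * Complex.exp (-(B * ((k^α : ℝ) : ℂ))) := by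
      intro n
      refine setIntegral_congr_fun measurableSet_Ioi fun k hk => ?_
      rw [hφ k hk]
    simp_rw [this]
    refine tendsto_integral_of_dominated_convergence (fun k => k^(s-1) * Real.exp (-(B.re * k^α))) ?_
      (stable_int s α B.re hs hα hB) ?_ ?_
    · intro n
      apply Measurable.aestronglyMeasurable
      fun_prop
    · intro n
      filter_upwards [ae_restrict_mem measurableSet_Ioi] with k hk
      have hk : 0 < k := hk
      rw [norm_mul, Complex.norm_real, Complex.norm_exp, Real.norm_of_nonneg (by positivity), Complex.neg_re, Complex.re_mul_ofReal]
      gcongr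
      refine mul_le_of_le_one_right (by positivity) (Real.exp_le_one_iff.mpr ?_)
      have := hepos n
      have : 0 < e n * k := by positivity
      linarith
    · refine Filter.Eventually.of_forall fun k => ?_
      have h1 : Filter.Tendsto (fun n => k^(s-1) * Real.exp (-(e n * k))) Filter.atTop (nhds (k^(s-1) * Real.exp (-(0 * k)))) := by
        refine Filter.Tendsto.const_mul _ ((Real.continuous_exp.tendsto _).comp (he.mul_const k).neg)
      simp only [zero_mul, neg_zero, Real.exp_zero, mul_one] at h1
      exact ((Complex.continuous_ofReal.tendsto _).comp h1).mul_const _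
  rw [mellin_stable s α hs hα B hB] at hJ
  have hJr := (Complex.continuous_re.tendsto _).comp hJ
  set R := ((1/α : ℝ) * (Complex.exp (-((s/α : ℝ) * Complex.log B)) * (Real.Gamma (s/α) : ℂ))).re with hR
  have hΓ := Real.Gamma_pos_of_pos hs
  have hlim : Filter.Tendsto (fun n => ∫ ω, Gk s (e n) (X ω)) Filter.atTop (nhds (R / Real.Gamma s)) := by
    refine (hJr.div_const (Real.Gamma s)).congr fun n => ?_
    simp only [Function.comp]
    rw [← (reg_identity X hX s hs (e n) (hepos n)).2]
    field_simp
  have hpt : ∀ᵐ ω : Ω, Filter.Tendsto (fun n => Gk s (e n) (X ω)) Filter.atTop (nhds (Gk s 0 (X ω))) := by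
    filter_upwards [hne] with ω hω
    exact Gk_tendsto s _ hω e he
  have hcos : 0 < Real.cos (Real.pi / 2 * s) := by
    have := Real.pi_pos
    apply Real.cos_pos_of_mem_Ioo; constructor <;> nlinarith
  have hGint : Integrable (fun ω => Gk s 0 (X ω)) := by
    refine ⟨((Gk_meas s 0).comp hX).aestronglyMeasurable, ?_⟩
    rw [hasFiniteIntegral_iff_ofReal (Filter.Eventually.of_forall fun ω => Gk_nonneg s 0 _ hs hs1 le_rfl)]
    calc ∫⁻ ω, ENNReal.ofReal (Gk s 0 (X ω))
        = ∫⁻ ω, Filter.liminf (fun n => ENNReal.ofReal (Gk s (e n) (X ω))) Filter.atTop := by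
          refine lintegral_congr_ae ?_
          filter_upwards [hpt] with ω hω
          exact ((ENNReal.continuous_ofReal.tendsto _).comp hω).liminf_eq.symm
      _ ≤ Filter.liminf (fun n => ∫⁻ ω, ENNReal.ofReal (Gk s (e n) (X ω))) Filter.atTop :=
          lintegral_liminf_le fun n => ((Gk_meas s (e n)).comp hX).ennreal_ofReal
      _ = Filter.liminf (fun n => ENNReal.ofReal (∫ ω, Gk s (e n) (X ω))) Filter.atTop := by
          congr 1; ext n
          rw [ofReal_integral_eq_lintegral_ofReal (reg_identity X hX s hs (e n) (hepos n)).1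
            (Filter.Eventually.of_forall fun ω => Gk_nonneg s _ _ hs hs1 (hepos n).le)]
      _ = ENNReal.ofReal (R / Real.Gamma s) := ((ENNReal.continuous_ofReal.tendsto _).comp hlim).liminf_eq
      _ < ⊤ := ENNReal.ofReal_lt_top
  have hae : (fun ω => Gk s 0 (X ω)) =ᵐ[ℙ] fun ω => Real.exp (-(s * Real.log |X ω|)) * Real.cos (Real.pi / 2 * s) := by
    filter_upwards [hne] with ω hω
    exact Gk_zero s _ hω
  have hI : Integrable (fun ω => Real.exp (-(s * Real.log |X ω|))) := by
    refine ((hGint.congr hae).mul_const (Real.cos (Real.pi / 2 * s))⁻¹).congr (Filter.Eventually.of_forall fun ω => ?_)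
    simp only
    rw [mul_assoc, mul_inv_cancel₀ hcos.ne', mul_one]
  refine ⟨hI, ?_⟩
  have hlim2 : Filter.Tendsto (fun n => ∫ ω, Gk s (e n) (X ω)) Filter.atTop (nhds (∫ ω, Gk s 0 (X ω))) := by
    refine tendsto_integral_of_dominated_convergence _ (fun n => ((Gk_meas s (e n)).comp hX).aestronglyMeasurable) hI ?_ hpt
    intro n
    filter_upwards [hne] with ω hω
    exact Gk_le s _ _ hs hω
  have := tendsto_nhds_unique hlim hlim2
  rw [integral_congr_ae hae, integral_mul_const] at this
  rw [← this]; field_simp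

end

lemma exp_rem (x : ℝ) (hx : x ≤ 0) :
    |Real.exp x - ∑ i ∈ Finset.range 6, x^i / (i.factorial : ℝ)| ≤ 4 * |x|^6 := by
  rcases le_or_gt |x| 1 with h | h
  · have h1 := Complex.norm_exp_sub_sum_le_norm_mul_exp x 6
    have e : Complex.exp x - ∑ i ∈ Finset.range 6, (x:ℂ)^i / (i.factorial : ℂ) =
      ((Real.exp x - ∑ i ∈ Finset.range 6, x^i / (i.factorial : ℝ) : ℝ) : ℂ) := by push_cast; rfl
    rw [e, Complex.norm_real, Complex.norm_real, Real.norm_eq_abs, Real.norm_eq_abs] at h1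
    have h3 : Real.exp |x| ≤ 4 := (Real.exp_le_exp.mpr h).trans (by linarith [Real.exp_one_lt_d9])
    refine h1.trans ?_
    rw [mul_comm]
    gcongr
  · have hp : ∀ i ≤ 6, |x|^i ≤ |x|^6 := fun i hi => pow_le_pow_right₀ h.le hi
    have h0 : |Real.exp x| ≤ |x|^6 := by
      rw [abs_of_pos (Real.exp_pos _)]
      exact (Real.exp_le_one_iff.mpr hx).trans (one_le_pow₀ h.le)
    have h1 : |∑ i ∈ Finset.range 6, x^i / (i.factorial : ℝ)| ≤ 3 * |x|^6 := by
      refine (Finset.abs_sum_le_sum_abs _ _).trans ?_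
      simp only [abs_div, abs_pow, Nat.abs_cast]
      simp only [Finset.sum_range_succ, Finset.sum_range_zero, Nat.factorial]
      push_cast
      have := hp 0 (by norm_num); have := hp 1 (by norm_num); have := hp 2 (by norm_num)
      have := hp 3 (by norm_num); have := hp 4 (by norm_num); have := hp 5 (by norm_num)
      have : 0 < |x|^6 := by positivity
      norm_num at *
      linarith
    refine (abs_sub _ _).trans ?_
    linarith

lemma exp_rem2 (s v : ℝ) (hs : 0 < s) (hs' : s ≤ 1/4) :
    |Real.exp (-(s * v)) - ∑ i ∈ Finset.range 6, (-s)^i / (i.factorial : ℝ) * v^i| ≤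
      (4 * |v|^6 + 2949120 * Real.exp (-(1/2 * v))) * s^6 := by
  have e : ∑ i ∈ Finset.range 6, (-s)^i / (i.factorial : ℝ) * v^i =
      ∑ i ∈ Finset.range 6, (-(s*v))^i / (i.factorial : ℝ) := by
    refine Finset.sum_congr rfl fun i _ => ?_
    rw [← neg_mul, mul_pow]; ring
  rw [e]
  have hE := Real.exp_pos (-(1/2 * v))
  rcases le_or_gt 0 v with h | h
  · refine (exp_rem (-(s*v)) (by nlinarith)).trans ?_
    rw [abs_neg, abs_mul, abs_of_pos hs, mul_pow]
    have : 0 < s^6 := by positivity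
    nlinarith
  · have h1 := Complex.norm_exp_sub_sum_le_norm_mul_exp ((-(s*v) : ℝ) : ℂ) 6
    have e : Complex.exp ((-(s*v) : ℝ) : ℂ) - ∑ i ∈ Finset.range 6, ((-(s*v) : ℝ) : ℂ)^i / (i.factorial : ℂ) =
      ((Real.exp (-(s*v)) - ∑ i ∈ Finset.range 6, (-(s*v))^i / (i.factorial : ℝ) : ℝ) : ℂ) := by push_cast; rfl
    rw [e, Complex.norm_real, Complex.norm_real, Real.norm_eq_abs, Real.norm_eq_abs, abs_neg, abs_mul, abs_of_pos hs,
      abs_of_neg h] at h1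
    refine h1.trans ?_
    have h2 := Real.pow_div_factorial_le_exp (-v/4) (by linarith) 6
    have h3 : (-v)^6 ≤ 2949120 * Real.exp (-v/4) := by
      simp only [Nat.factorial] at h2
      push_cast at h2
      rw [div_pow] at h2
      linarith
    have h4 : Real.exp (s * -v) ≤ Real.exp (-v/4) := by
      apply Real.exp_le_exp.mpr; nlinarith
    have h5 : Real.exp (-v/4) * Real.exp (-v/4) = Real.exp (-(1/2 * v)) := by
      rw [← Real.exp_add]; congr 1; ring
    rw [mul_pow]
    calc s^6 * (-v)^6 * Real.exp (s * -v) ≤ s^6 * (2949120 * Real.exp (-v/4)) * Real.exp (-v/4) := by gcongr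
      _ = 2949120 * Real.exp (-(1/2 * v)) * s^6 := by rw [← h5]; ring
      _ ≤ _ := by
        have : 0 ≤ 4 * |v|^6 := by positivity
        gcongr; linarith

section
variable {Ω : Type*} [MeasureSpace Ω] [IsProbabilityMeasure (ℙ : Measure Ω)]

lemma taylor_moment (V : Ω → ℝ) (hVm : Measurable V) (hV : ∀ p : ℕ, Integrable (fun ω => |V ω|^p))
    (hexp : ∀ s : ℝ, 0 < s → s < 1 → Integrable (fun ω => Real.exp (-(s * V ω)))) :
    E6 (fun s => ∫ ω, Real.exp (-(s * V ω)))
      (fun s => ∑ i ∈ Finset.range 6, (-s)^i / (i.factorial : ℝ) * ∫ ω, (V ω)^i) := by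
  have hVi : ∀ p : ℕ, Integrable (fun ω => (V ω)^p) := fun p => by
    refine (hV p).mono' (hVm.pow_const p).aestronglyMeasurable (Filter.Eventually.of_forall fun ω => ?_)
    rw [Real.norm_eq_abs, abs_pow]
  have hbd : Integrable (fun ω => 4 * |V ω|^6 + 2949120 * Real.exp (-(1/2 * V ω))) :=
    ((hV 6).const_mul _).add ((hexp (1/2) (by norm_num) (by norm_num)).const_mul _)
  refine Asymptotics.IsBigO.of_bound (∫ ω, (4 * |V ω|^6 + 2949120 * Real.exp (-(1/2 * V ω)))) ?_
  have hmem : ∀ᶠ s in nhdsWithin (0:ℝ) (Set.Ioi 0), s ≤ 1/4 :=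
    nhdsWithin_le_nhds (Iic_mem_nhds (by norm_num))
  filter_upwards [hmem, self_mem_nhdsWithin] with s hs hs0
  have hs0 : 0 < s := hs0
  have hsum : Integrable (fun ω => ∑ i ∈ Finset.range 6, (-s)^i / (i.factorial : ℝ) * (V ω)^i) :=
    integrable_finsetSum _ fun i _ => (hVi i).const_mul _
  have e : (∑ i ∈ Finset.range 6, (-s)^i / (i.factorial : ℝ) * ∫ ω, (V ω)^i) =
      ∫ ω, ∑ i ∈ Finset.range 6, (-s)^i / (i.factorial : ℝ) * (V ω)^i := by
    rw [integral_finsetSum _ fun i _ => (hVi i).const_mul _]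
    refine Finset.sum_congr rfl fun i _ => ?_
    rw [integral_const_mul]
  rw [e, ← integral_sub (hexp s hs0 (by linarith)) hsum, Real.norm_of_nonneg (pow_pos hs0 6).le, ← integral_mul_const]
  refine norm_integral_le_of_norm_le (hbd.mul_const _) (Filter.Eventually.of_forall fun ω => ?_)
  exact exp_rem2 s (V ω) hs0 hs

end

theorem central_log_moments_three_four_five {Ω : Type*} [MeasureSpace Ω]
    [IsProbabilityMeasure (ℙ : Measure Ω)] (X : Ω → ℝ) (ν θ τ : ℝ)
    (hX : IsStrictlyStable X ν θ τ)
    (DV : ℝ) (hDV : DV = Real.pi ^ 2 / 4 * (1 - θ ^ 2) + Real.pi ^ 2 / 6 * (ν - 1)) :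
    (∫ ω, (Real.log |X ω| - τ) ^ 3) = 2 * zetaR 3 * (ν ^ ((3 : ℝ) / 2) - 1) ∧
    (∫ ω, (Real.log |X ω| - τ) ^ 4) =
      Real.pi ^ 4 * ((1 - θ ^ 4) / 8 + (ν ^ 2 - 1) / 15) + 3 * DV ^ 2 ∧
    (∫ ω, (Real.log |X ω| - τ) ^ 5) =
      20 * zetaR 3 * (ν ^ ((3 : ℝ) / 2) - 1) * DV + 24 * zetaR 5 * (ν ^ ((5 : ℝ) / 2) - 1) := by
  obtain ⟨hXm, hν, hθ, hX0, hlog, hφ⟩ := hX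
  obtain ⟨β, hβd⟩ : ∃ β, β = Real.sqrt ν := ⟨_, rfl⟩
  have hνpos : 0 < ν := by linarith
  have hβ : 0 < β := by rw [hβd]; exact Real.sqrt_pos.mpr hνpos
  have hβ2 : β^2 = ν := by rw [hβd]; exact Real.sq_sqrt hνpos.le
  have hα : ν ^ (-(1/2) : ℝ) = β⁻¹ := by
    rw [Real.rpow_neg hνpos.le, ← Real.sqrt_eq_rpow, hβd]
  have h32 : ν ^ ((3:ℝ)/2) = β^3 := by
    rw [← hβ2, ← Real.rpow_natCast, ← Real.rpow_natCast, ← Real.rpow_mul hβ.le]; norm_num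
  have h52 : ν ^ ((5:ℝ)/2) = β^5 := by
    rw [← hβ2, ← Real.rpow_natCast, ← Real.rpow_natCast, ← Real.rpow_mul hβ.le]; norm_num
  have z3 : zetaR 3 = zs 3 := by have := zs_eq 3 (by norm_num); exact_mod_cast this
  have z5 : zetaR 5 = zs 5 := by have := zs_eq 5 (by norm_num); exact_mod_cast this
  rw [hα] at hφ
  rw [← hβd] at hθ
  have hθ1 : |θ| ≤ 1 := hθ.trans (min_le_left _ _)
  have hθ2 : |θ| ≤ 2 * β - 1 := hθ.trans (min_le_right _ _)
  rw [h32, h52, z3, z5]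
  have hν2 : ν^2 = β^4 := by rw [← hβ2]; ring
  rw [hν2]
  by_cases hdeg : |θ| < β
  · -- nondegenerate case
    obtain ⟨B, hBd⟩ : ∃ B, B = Complex.exp (((β⁻¹ * τ + Real.eulerMascheroniConstant * (β⁻¹ - 1) : ℝ) : ℂ)
      + ((-(Real.pi / 2 * θ * β⁻¹) : ℝ) : ℂ) * Complex.I) := ⟨_, rfl⟩
    have habs : |Real.pi / 2 * θ * β⁻¹| < Real.pi / 2 := by
      rw [abs_mul, abs_mul, abs_of_pos (by positivity : 0 < Real.pi / 2), abs_of_pos (inv_pos.mpr hβ), mul_assoc]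
      have : |θ| * β⁻¹ < 1 := by rw [← div_eq_mul_inv, div_lt_one hβ]; exact hdeg
      have := Real.pi_pos
      nlinarith
    have habs' := abs_lt.mp habs
    have hB : 0 < B.re := by
      rw [hBd, Complex.exp_re]
      refine mul_pos (Real.exp_pos _) (Real.cos_pos_of_mem_Ioo ?_)
      simp only [Complex.add_im, Complex.ofReal_im, Complex.im_ofReal_mul, Complex.I_im, zero_add, mul_one]
      constructor <;> linarith
    have hlogB : Complex.log B = ((β⁻¹ * τ + Real.eulerMascheroniConstant * (β⁻¹ - 1) : ℝ) : ℂ)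
      + ((-(Real.pi / 2 * θ * β⁻¹) : ℝ) : ℂ) * Complex.I := by
      rw [hBd, Complex.log_exp]
      · simp only [Complex.add_im, Complex.ofReal_im, Complex.im_ofReal_mul, Complex.I_im, zero_add, mul_one]
        linarith [Real.pi_pos]
      · simp only [Complex.add_im, Complex.ofReal_im, Complex.im_ofReal_mul, Complex.I_im, zero_add, mul_one]
        linarith [Real.pi_pos]
    have hφ' : ∀ k : ℝ, 0 < k → (∫ ω, Complex.exp (Complex.I * (k:ℂ) * (X ω : ℂ))) =
      Complex.exp (-(B * ((k^(β⁻¹) : ℝ) : ℂ))) := by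
      intro k hk
      rw [hφ k hk.ne', abs_of_pos hk, Real.sign_of_pos hk, Real.rpow_def_of_pos hk, hBd, Complex.ofReal_exp,
        ← Complex.exp_add]
      congr 3
      push_cast
      ring
    have hfm := fun s hs hs1 => frac_moment_s13 X hXm hX0 β⁻¹ (inv_pos.mpr hβ) B hB hφ' s hs hs1
    have hesplit : ∀ s ω, Real.exp (-(s * (Real.log |X ω| - τ))) = Real.exp (s * τ) * Real.exp (-(s * Real.log |X ω|)) := by
      intro s ω
      rw [← Real.exp_add]; congr 1; ring
    have hVm : Measurable (fun ω => Real.log |X ω| - τ) := by fun_prop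
    have hVint : ∀ p : ℕ, Integrable (fun ω => |Real.log |X ω| - τ|^p) := by
      intro p
      refine Integrable.mono' (g := fun ω => 2^(p-1) * ((abs (Real.log (abs (X ω))))^p + |τ|^p))
        (((hlog p).add (integrable_const _)).const_mul _) (by
          apply Measurable.aestronglyMeasurable; fun_prop) (Filter.Eventually.of_forall fun ω => ?_)
      rw [Real.norm_of_nonneg (by positivity)]
      exact (pow_le_pow_left₀ (abs_nonneg _) (abs_sub _ _) p).trans
        (add_pow_le (abs_nonneg _) (abs_nonneg _) p)
    have hT := taylor_moment (fun ω => Real.log |X ω| - τ) hVm hVint (by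
      intro s hs hs1
      simp_rw [hesplit]
      exact (hfm s hs hs1).1.const_mul _)
    refine match_coeffs _ (fun i => ∫ ω, (Real.log |X ω| - τ)^i) β θ DV hβ (by simp) hT ?_ (by rw [hDV, hβ2])
    have hmem : ∀ᶠ s in nhdsWithin (0:ℝ) (Set.Ioi 0), s < 1 :=
      nhdsWithin_le_nhds (Iio_mem_nhds (by norm_num))
    filter_upwards [hmem, self_mem_nhdsWithin] with s hs1 hs0
    have hs0 : 0 < s := hs0
    have h := (hfm s hs0 hs1).2
    simp_rw [hesplit]
    rw [integral_const_mul]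
    have hΓ := Real.Gamma_pos_of_pos hs0
    have e1 : ((1/β⁻¹ : ℝ) * (Complex.exp (-((s/β⁻¹ : ℝ) * Complex.log B)) * (Real.Gamma (s/β⁻¹) : ℂ))).re
      = β * (Real.exp (-(s * τ) - Real.eulerMascheroniConstant * (1 - β) * s) * Real.cos (Real.pi / 2 * θ * s) * Real.Gamma (β * s)) := by
      rw [hlogB, Complex.re_ofReal_mul, Complex.re_mul_ofReal, Complex.exp_re]
      have a1 : (-(((s/β⁻¹ : ℝ):ℂ) * (((β⁻¹ * τ + Real.eulerMascheroniConstant * (β⁻¹ - 1) : ℝ) : ℂ)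
        + ((-(Real.pi / 2 * θ * β⁻¹) : ℝ) : ℂ) * Complex.I))).re = -(s * τ) - Real.eulerMascheroniConstant * (1 - β) * s := by
        rw [Complex.neg_re, Complex.re_ofReal_mul]
        simp only [Complex.add_re, Complex.ofReal_re, Complex.re_ofReal_mul, Complex.I_re, mul_zero, add_zero]
        field_simp
        ring
      have a2 : (-(((s/β⁻¹ : ℝ):ℂ) * (((β⁻¹ * τ + Real.eulerMascheroniConstant * (β⁻¹ - 1) : ℝ) : ℂ)
        + ((-(Real.pi / 2 * θ * β⁻¹) : ℝ) : ℂ) * Complex.I))).im = Real.pi / 2 * θ * s := by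
        rw [Complex.neg_im, Complex.im_ofReal_mul]
        simp only [Complex.add_im, Complex.ofReal_im, Complex.im_ofReal_mul, Complex.I_im, zero_add, mul_one]
        field_simp
      have a3 : s / β⁻¹ = β * s := by field_simp
      rw [a1, a2, a3]
      congr 1
      field_simp
    rw [e1] at h
    have g1 : Real.Gamma (1 + s) = s * Real.Gamma s := by rw [add_comm, Real.Gamma_add_one hs0.ne']
    have g2 : Real.Gamma (1 + β * s) = β * s * Real.Gamma (β * s) := by
      rw [add_comm, Real.Gamma_add_one (by positivity)]
    have hΓ2 : 0 < Real.Gamma (β * s) := Real.Gamma_pos_of_pos (by positivity)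
    rw [Real.exp_sub, Real.exp_sub, Real.exp_log (by rw [g2]; positivity), Real.exp_log (by rw [g1]; positivity), g1, g2]
    rw [Real.exp_sub, Real.exp_neg] at h
    have hx1 := Real.exp_pos (s * τ)
    have hx2 := Real.exp_pos (Real.eulerMascheroniConstant * (1 - β) * s)
    generalize Real.exp (s * τ) = x1 at *
    generalize Real.exp (Real.eulerMascheroniConstant * (1 - β) * s) = x2 at *
    generalize Real.cos (Real.pi / 2 * θ * s) = y2 at *
    generalize Real.cos (Real.pi / 2 * s) = y1 at *
    generalize Real.Gamma s = w1 at *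
    generalize Real.Gamma (β * s) = w2 at *
    generalize (∫ ω, Real.exp (-(s * Real.log |X ω|))) = I at *
    have : x1 * I * y1 = x1 * (I * y1 * w1) / w1 := by field_simp
    rw [this, h]
    field_simp
  · -- degenerate case
    have hβ1 : β = 1 := by linarith
    have hθe : |θ| = 1 := by linarith
    have hθsq : θ^2 = 1 := by rw [← sq_abs, hθe]; norm_num
    have hθ4 : θ^4 = 1 := by rw [show θ^4 = (θ^2)^2 by ring, hθsq]; norm_num
    have hDV0 : DV = 0 := by rw [hDV, ← hβ2, hβ1, hθsq]; ring
    have hν1 : ν = 1 := by rw [← hβ2, hβ1]; norm_num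
    have hmap : (ℙ : Measure Ω).map X = Measure.dirac (θ * Real.exp τ) := by
      have : IsProbabilityMeasure ((ℙ : Measure Ω).map X) := Measure.isProbabilityMeasure_map hXm.aemeasurable
      apply Measure.ext_of_charFun
      ext k
      rw [charFun_dirac]
      rcases eq_or_ne k 0 with rfl | hk
      · simp
      rw [charFun_apply_real, integral_map hXm.aemeasurable (by fun_prop)]
      have h1 := hφ k hk
      have h2 : (∫ ω, Complex.exp ((k:ℂ) * (X ω : ℂ) * Complex.I)) = ∫ ω, Complex.exp (Complex.I * (k : ℂ) * (X ω : ℂ)) := by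
        congr 1; ext ω; congr 1; ring
      rw [h2, h1, hβ1]
      congr 1
      have e0 : ((((1:ℝ)⁻¹ : ℝ):ℂ) * (((Real.log |k| : ℝ) : ℂ) + (τ : ℂ) -
              Complex.I * ((Real.pi / 2 : ℝ) : ℂ) * (θ : ℂ) * ((Real.sign k : ℝ) : ℂ)) +
          ((Real.eulerMascheroniConstant : ℝ) : ℂ) * ((((1:ℝ)⁻¹ : ℝ) : ℂ) - 1)) =
          ((Real.log |k| : ℝ) : ℂ) + ((τ:ℝ):ℂ) + ((-(θ * Real.sign k) : ℝ):ℂ) * (Real.pi / 2 * Complex.I) := by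
        push_cast
        simp
        ring
      rw [e0, Complex.exp_add, Complex.exp_add, ← Complex.ofReal_exp, ← Complex.ofReal_exp, Real.exp_log (abs_pos.mpr hk)]
      have hinner : (inner ℝ (θ * Real.exp τ) k : ℝ) = θ * Real.exp τ * k := by
        simp [mul_comm]
      have hexpI : ∀ c : ℝ, (c = 1 ∨ c = -1) → Complex.exp ((c:ℂ) * (Real.pi / 2 * Complex.I)) = c * Complex.I := by
        rintro c (rfl | rfl)
        · simp [Complex.exp_pi_div_two_mul_I]
        · have : (((-1:ℝ):ℂ)) * (Real.pi / 2 * Complex.I) = -(Real.pi / 2 * Complex.I) := by push_cast; ring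
          rw [this, Complex.exp_neg, Complex.exp_pi_div_two_mul_I, Complex.inv_I]; simp
      have hθc : θ = 1 ∨ θ = -1 := by
        rcases abs_eq (by norm_num : (0:ℝ) ≤ 1) |>.mp hθe with h | h <;> simp [h]
      rw [hexpI]
      · have : |k| * Real.sign k = k := by
          rcases lt_or_gt_of_ne hk with h | h
          · rw [Real.sign_of_neg h, abs_of_neg h]; ring
          · rw [Real.sign_of_pos h, abs_of_pos h]; ring
        rw [hinner]
        nth_rewrite 3 [← this]
        push_cast
        ring
      · rcases lt_or_gt_of_ne hk with h | h
        · rw [Real.sign_of_neg h]; rcases hθc with h | h <;> rw [h] <;> norm_num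
        · rw [Real.sign_of_pos h]; rcases hθc with h | h <;> rw [h] <;> norm_num
    have hae : ∀ᵐ ω : Ω, X ω = θ * Real.exp τ := by
      have : ∀ᵐ x ∂((ℙ : Measure Ω).map X), x = θ * Real.exp τ := by
        rw [hmap, ae_dirac_eq]; exact rfl
      exact ae_of_ae_map hXm.aemeasurable this
    have hz : ∀ p : ℕ, p ≠ 0 → (∫ ω, (Real.log |X ω| - τ) ^ p) = 0 := by
      intro p hp
      rw [← integral_zero Ω ℝ]
      refine integral_congr_ae ?_
      filter_upwards [hae] with ω hω
      rw [hω, abs_mul, hθe, one_mul, abs_of_pos (Real.exp_pos _), Real.log_exp, sub_self, zero_pow hp]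
    rw [hz 3 (by norm_num), hz 4 (by norm_num), hz 5 (by norm_num), hDV0, hβ1, hθ4]
    norm_num
end
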